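/- arXiv:1209.6613 — 3 statements merged into one kernel-verified Lean document; each statement's English description precedes it below -/
import Mathlib

section
/- Suppose Re μ > 0. Then Z_μ is a first integral of L: Z_μ ∈ C^∞(ℝ²∖{0}; ℂ), A·∂Z_μ/∂x + B·∂Z_μ/∂y = 0 at every point of ℝ²∖{0}, dZ_μ vanishes nowhere on ℝ²∖{0}, and Z_μ maps ℝ² onto ℂ. If, in addition, L satisfies condition (P) in ℝ²∖{0}, then Z_μ : ℝ² → ℂ is a homeomorphism. -/
open Real Complex Set

/-- A function on the punctured plane of the form `exp (log r / μ) * exp (i (θ + φ θ))` in polar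
coordinates, extended by zero at the origin. -/
structure IsPolarExp (mu : ℂ) (phi : ℝ → ℂ) (Z : ℝ × ℝ → ℂ) : Prop where
  zero : Z 0 = 0
  polar : ∀ r θ : ℝ, 0 < r → Z (r * Real.cos θ, r * Real.sin θ) =
    Complex.exp ((Real.log r : ℂ) / mu) * Complex.exp (Complex.I * ((θ : ℂ) + phi θ))

theorem inv_re_pos {w : ℂ} (hw : 0 < w.re) : 0 < (w⁻¹).re := by
  have : w ≠ 0 := by rintro rfl; simp at hw
  rw [Complex.inv_re]
  exact div_pos hw (Complex.normSq_pos.2 this)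

theorem exists_polar_coord (z : ℝ × ℝ) :
    ∃ θ : ℝ, z =
      (‖equivRealProdCLM.symm z‖ * Real.cos θ, ‖equivRealProdCLM.symm z‖ * Real.sin θ) := by
  refine ⟨(equivRealProdCLM.symm z).arg, ?_⟩
  rw [Complex.norm_mul_cos_arg, Complex.norm_mul_sin_arg]
  simp

theorem norm_polar_coord {r : ℝ} (hr : 0 ≤ r) (θ : ℝ) :
    ‖equivRealProdCLM.symm (r * Real.cos θ, r * Real.sin θ)‖ = r := by
  have : equivRealProdCLM.symm (r * Real.cos θ, r * Real.sin θ)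
      = (r : ℂ) * Complex.exp (θ * Complex.I) := by
    apply Complex.ext <;> simp [Complex.exp_ofReal_mul_I_re, Complex.exp_ofReal_mul_I_im]
  rw [this, norm_mul, Complex.norm_exp_ofReal_mul_I, mul_one, Complex.norm_of_nonneg hr]

theorem exists_polar_coord_of_ne_zero {z : ℝ × ℝ} (hz : z ≠ 0) :
    ∃ r θ : ℝ, 0 < r ∧ z = (r * Real.cos θ, r * Real.sin θ) := by
  obtain ⟨θ, hθ⟩ := exists_polar_coord z
  exact ⟨_, θ, by simpa using hz, hθ⟩

theorem strictMono_of_hasDerivAt_nonneg {h h' : ℝ → ℝ} (hd : ∀ x, HasDerivAt h (h' x) x)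
    (hnn : ∀ x, 0 ≤ h' x) (hint : interior {x | h' x = 0} = ∅) : StrictMono h := by
  have hmono : Monotone h := monotone_of_hasDerivAt_nonneg hd hnn
  refine hmono.strictMono_of_injective fun x y hxy => ?_
  wlog hlt : x < y generalizing x y
  · rcases lt_trichotomy x y with h1 | h1 | h1
    · exact this x y hxy h1
    · exact h1
    · exact (this y x hxy.symm h1).symm
  exfalso
  have hsub : Ioo x y ⊆ interior {x | h' x = 0} := by
    refine interior_maximal (fun t ht => ?_) isOpen_Ioo
    have hc : h =ᶠ[nhds t] fun _ => h x := by
      filter_upwards [isOpen_Ioo.mem_nhds ht] with u hu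
      exact le_antisymm ((hmono hu.2.le).trans hxy.ge) (hmono hu.1.le)
    exact (hd t).unique ((hasDerivAt_const t (h x)).congr_of_eventuallyEq hc)
  rw [hint] at hsub
  exact hsub (show (x + y) / 2 ∈ Ioo x y from ⟨by linarith, by linarith⟩)

namespace IsPolarExp

variable {mu : ℂ} {phi : ℝ → ℂ} {Z : ℝ × ℝ → ℂ}

theorem contDiffAt (hZ : IsPolarExp mu phi Z) (hphi : ContDiff ℝ (⊤ : ℕ∞) phi)
    {z : ℝ × ℝ} (hz : z ≠ 0) : ContDiffAt ℝ (⊤ : ℕ∞) Z z := by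
  obtain ⟨r, θ, hr, rfl⟩ := exists_polar_coord_of_ne_zero hz
  set e : ℂ := (r : ℂ) * Complex.exp (θ * Complex.I) with he
  have he0 : e ≠ 0 := by simp [he, hr.ne']
  set w : ℝ × ℝ → ℂ := fun z => equivRealProdCLM.symm z / e with hw
  have hwc : ContDiff ℝ (⊤ : ℕ∞) w := equivRealProdCLM.symm.contDiff.div_const e
  have hez : equivRealProdCLM.symm (r * Real.cos θ, r * Real.sin θ) = e := by
    apply Complex.ext <;> simp [he, Complex.exp_ofReal_mul_I_re, Complex.exp_ofReal_mul_I_im]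
  have hw1 : w (r * Real.cos θ, r * Real.sin θ) = 1 := by
    simp only [hw, hez, div_self he0]
  have hslit : w (r * Real.cos θ, r * Real.sin θ) ∈ slitPlane := by
    rw [hw1]; exact one_mem_slitPlane
  have hlog : ContDiffAt ℝ (⊤ : ℕ∞) (fun z => Complex.log (w z))
      (r * Real.cos θ, r * Real.sin θ) :=
    ((Complex.contDiffAt_log hslit).restrict_scalars ℝ).comp _ hwc.contDiffAt
  have hre : ContDiffAt ℝ (⊤ : ℕ∞) (fun z => ((Complex.log (w z)).re : ℝ))
      (r * Real.cos θ, r * Real.sin θ) := reCLM.contDiff.contDiffAt.comp _ hlog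
  have him : ContDiffAt ℝ (⊤ : ℕ∞) (fun z => ((Complex.log (w z)).im : ℝ))
      (r * Real.cos θ, r * Real.sin θ) := imCLM.contDiff.contDiffAt.comp _ hlog
  have hang : ContDiffAt ℝ (⊤ : ℕ∞) (fun z => θ + (Complex.log (w z)).im)
      (r * Real.cos θ, r * Real.sin θ) := contDiffAt_const.add him
  have hmodel : ContDiffAt ℝ (⊤ : ℕ∞) (fun z =>
      Complex.exp (((Real.log r + (Complex.log (w z)).re : ℝ) : ℂ) / mu) *
      Complex.exp (Complex.I * (((θ + (Complex.log (w z)).im : ℝ) : ℂ) +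
        phi (θ + (Complex.log (w z)).im)))) (r * Real.cos θ, r * Real.sin θ) := by
    refine ContDiffAt.mul (ContDiffAt.cexp (ContDiffAt.div_const ?_ _))
      (ContDiffAt.cexp (contDiffAt_const.mul (ContDiffAt.add ?_ ?_)))
    · exact ofRealCLM.contDiff.contDiffAt.comp _ (contDiffAt_const.add hre)
    · exact ofRealCLM.contDiff.contDiffAt.comp _ hang
    · exact hphi.contDiffAt.comp _ hang
  refine hmodel.congr_of_eventuallyEq ?_
  filter_upwards [hwc.continuous.continuousAt.eventually_ne (y := 0)
    (by rw [hw1]; exact one_ne_zero)] with z hz0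
  set l := Complex.log (w z) with hl
  have hexp : equivRealProdCLM.symm z
      = ((r * Real.exp l.re : ℝ) : ℂ) * Complex.exp ((θ + l.im : ℝ) * Complex.I) := by
    have h1 : equivRealProdCLM.symm z = w z * e := by simp only [hw]; field_simp
    rw [h1, ← Complex.exp_log hz0, ← hl, he]
    nth_rewrite 1 [← Complex.re_add_im l]
    push_cast
    rw [add_mul, Complex.exp_add, Complex.exp_add]
    ring
  have hzz : z = ((r * Real.exp l.re) * Real.cos (θ + l.im),
      (r * Real.exp l.re) * Real.sin (θ + l.im)) := by
    apply equivRealProdCLM.symm.injective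
    rw [hexp]
    apply Complex.ext <;>
      simp only [Complex.re_ofReal_mul, Complex.im_ofReal_mul, Complex.exp_ofReal_mul_I_re,
        Complex.exp_ofReal_mul_I_im, equivRealProdCLM_symm_apply_re,
        equivRealProdCLM_symm_apply_im]
  rw [hzz, hZ.polar _ _ (by positivity), Real.log_mul hr.ne' (Real.exp_ne_zero _), Real.log_exp]

theorem fderiv_radial (hZ : IsPolarExp mu phi Z) {r θ : ℝ} (hr : 0 < r)
    (hd : DifferentiableAt ℝ Z (r * Real.cos θ, r * Real.sin θ)) :
    fderiv ℝ Z (r * Real.cos θ, r * Real.sin θ) (Real.cos θ, Real.sin θ) =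
      Z (r * Real.cos θ, r * Real.sin θ) / (mu * r) := by
  have hcurve : HasDerivAt (fun s : ℝ => (s * Real.cos θ, s * Real.sin θ))
      (Real.cos θ, Real.sin θ) r := by
    simpa using ((hasDerivAt_id r).mul_const (Real.cos θ)).prodMk
      ((hasDerivAt_id r).mul_const (Real.sin θ))
  have h1 := hd.hasFDerivAt.comp_hasDerivAt r hcurve
  have h2 := ((((Real.hasDerivAt_log hr.ne').ofReal_comp).div_const mu).cexp).mul_const
    (Complex.exp (Complex.I * ((θ : ℂ) + phi θ)))
  have h3 : (Z ∘ fun s : ℝ => (s * Real.cos θ, s * Real.sin θ)) =ᶠ[nhds r] fun s : ℝ =>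
      Complex.exp ((Real.log s : ℂ) / mu) * Complex.exp (Complex.I * ((θ : ℂ) + phi θ)) := by
    filter_upwards [lt_mem_nhds hr] with s hs using hZ.polar s θ hs
  rw [h1.unique (h2.congr_of_eventuallyEq h3), hZ.polar r θ hr]
  push_cast
  simp only [div_eq_mul_inv, mul_inv]
  ring

theorem fderiv_angular (hZ : IsPolarExp mu phi Z) {r θ : ℝ} (hr : 0 < r) {d : ℂ}
    (hphi : HasDerivAt phi d θ) (hd : DifferentiableAt ℝ Z (r * Real.cos θ, r * Real.sin θ)) :
    fderiv ℝ Z (r * Real.cos θ, r * Real.sin θ) (-(r * Real.sin θ), r * Real.cos θ) =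
      Complex.I * (1 + d) * Z (r * Real.cos θ, r * Real.sin θ) := by
  have hcurve : HasDerivAt (fun s : ℝ => (r * Real.cos s, r * Real.sin s))
      (-(r * Real.sin θ), r * Real.cos θ) θ := by
    simpa using ((Real.hasDerivAt_cos θ).const_mul r).prodMk ((Real.hasDerivAt_sin θ).const_mul r)
  have h1 := hd.hasFDerivAt.comp_hasDerivAt θ hcurve
  have h2 := (((((hasDerivAt_id θ).ofReal_comp).add hphi).const_mul Complex.I).cexp).const_mul
    (Complex.exp ((Real.log r : ℂ) / mu))
  have h3 : (Z ∘ fun s : ℝ => (r * Real.cos s, r * Real.sin s)) = fun s : ℝ =>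
      Complex.exp ((Real.log r : ℂ) / mu) * Complex.exp (Complex.I * ((s : ℂ) + phi s)) :=
    funext fun s => hZ.polar r s hr
  rw [h3] at h1
  rw [h1.unique h2, hZ.polar r θ hr]
  simp
  ring

theorem apply_ne_zero (hZ : IsPolarExp mu phi Z) {z : ℝ × ℝ} (hz : z ≠ 0) : Z z ≠ 0 := by
  obtain ⟨r, θ, hr, rfl⟩ := exists_polar_coord_of_ne_zero hz
  rw [hZ.polar r θ hr]
  exact mul_ne_zero (Complex.exp_ne_zero _) (Complex.exp_ne_zero _)

theorem surjective (hZ : IsPolarExp mu phi Z) (hmu : 0 < mu.re) (hc : Continuous phi)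
    (hper : Function.Periodic phi (2 * Real.pi)) : Function.Surjective Z := by
  intro w
  rcases eq_or_ne w 0 with rfl | hw
  · exact ⟨0, hZ.zero⟩
  have hmu0 : mu ≠ 0 := by rintro rfl; simp at hmu
  obtain ⟨C, hC⟩ := (hper.compact_of_continuous Real.two_pi_pos.ne' hc).isBounded.exists_norm_le
  have hb : ∀ θ, |(mu * phi θ).re| ≤ ‖mu‖ * C := fun θ =>
    (Complex.abs_re_le_norm _).trans <| by
      rw [norm_mul]; exact mul_le_mul_of_nonneg_left (hC _ (mem_range_self θ)) (norm_nonneg _)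
  have hcont : Continuous fun θ : ℝ => mu.re * θ + (mu * phi θ).re := by fun_prop
  have hlin : Filter.Tendsto (fun θ : ℝ => mu.re * θ) Filter.atTop Filter.atTop :=
    Filter.tendsto_id.const_mul_atTop hmu
  have hlin' : Filter.Tendsto (fun θ : ℝ => mu.re * θ) Filter.atBot Filter.atBot :=
    Filter.tendsto_id.const_mul_atBot hmu
  obtain ⟨θ, hθ⟩ := hcont.surjective
    (Filter.tendsto_atTop_add_right_of_le _ (-(‖mu‖ * C)) hlin fun θ => (abs_le.1 (hb θ)).1)
    (Filter.tendsto_atBot_add_right_of_ge _ (‖mu‖ * C) hlin' fun θ => (abs_le.1 (hb θ)).2)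
    (mu * Complex.log w).im
  set s : ℝ := (mu * Complex.log w).re + (mu * ((θ : ℂ) + phi θ)).im with hs
  refine ⟨(Real.exp s * Real.cos θ, Real.exp s * Real.sin θ), ?_⟩
  rw [hZ.polar _ _ (Real.exp_pos s), Real.log_exp, ← Complex.exp_add]
  have key : (s : ℂ) + Complex.I * (mu * ((θ : ℂ) + phi θ)) = mu * Complex.log w := by
    apply Complex.ext
    · simp only [hs, Complex.add_re, Complex.ofReal_re, Complex.I_mul_re]; ring
    · rw [← hθ]
      simp [mul_add]
  have : (s : ℂ) / mu + Complex.I * ((θ : ℂ) + phi θ) = Complex.log w := by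
    field_simp
    linear_combination key
  rw [this, Complex.exp_log hw]

theorem injective (hZ : IsPolarExp mu phi Z) (hmu : mu ≠ 0)
    (hper : Function.Periodic phi (2 * Real.pi))
    (hinj : Function.Injective fun θ : ℝ => (mu * ((θ : ℂ) + phi θ)).re) :
    Function.Injective Z := by
  intro z z' h
  rcases eq_or_ne z 0 with rfl | hz
  · by_contra hne
    exact hZ.apply_ne_zero (Ne.symm hne) (h ▸ hZ.zero)
  rcases eq_or_ne z' 0 with rfl | hz'
  · exact absurd (h.trans hZ.zero) (hZ.apply_ne_zero hz)
  obtain ⟨r, θ, hr, rfl⟩ := exists_polar_coord_of_ne_zero hz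
  obtain ⟨r', θ', hr', rfl⟩ := exists_polar_coord_of_ne_zero hz'
  rw [hZ.polar r θ hr, hZ.polar r' θ' hr', ← Complex.exp_add, ← Complex.exp_add,
    Complex.exp_eq_exp_iff_exists_int] at h
  obtain ⟨n, hn⟩ := h
  have hphi : phi (θ' + n * (2 * Real.pi)) = phi θ' := hper.int_mul n θ'
  have key : (Real.log r : ℂ) + Complex.I * (mu * ((θ : ℂ) + phi θ)) = Real.log r' +
      Complex.I * (mu * (((θ' + n * (2 * Real.pi) : ℝ) : ℂ) + phi (θ' + n * (2 * Real.pi)))) := by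
    rw [hphi]
    field_simp at hn
    push_cast
    linear_combination hn
  have him := congrArg Complex.im key
  simp only [Complex.add_im, Complex.ofReal_im, Complex.I_mul_im, zero_add] at him
  have hθ : θ = θ' + n * (2 * Real.pi) := hinj him
  rw [← hθ] at key
  have hlog : Real.log r = Real.log r' := by exact_mod_cast add_right_cancel key
  rw [Real.log_injOn_pos hr hr' hlog, hθ, Real.cos_add_int_mul_two_pi,
    Real.sin_add_int_mul_two_pi]

theorem exists_norm_bounds (hZ : IsPolarExp mu phi Z) (hmu : 0 < mu.re) (hc : Continuous phi)
    (hper : Function.Periodic phi (2 * Real.pi)) :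
    ∃ C : ℝ, ∀ z : ℝ × ℝ,
      Real.exp (-C) * ‖equivRealProdCLM.symm z‖ ^ (mu⁻¹).re ≤ ‖Z z‖ ∧
      ‖Z z‖ ≤ Real.exp C * ‖equivRealProdCLM.symm z‖ ^ (mu⁻¹).re := by
  obtain ⟨C, hC⟩ := (hper.compact_of_continuous Real.two_pi_pos.ne' hc).isBounded.exists_norm_le
  refine ⟨C, fun z => ?_⟩
  rcases eq_or_ne z 0 with rfl | hz
  · have : (mu⁻¹).re ≠ 0 := (inv_re_pos hmu).ne'
    simp only [hZ.zero, map_zero, norm_zero, Real.zero_rpow this, mul_zero, le_refl,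
      and_self]
  obtain ⟨r, θ, hr, rfl⟩ := exists_polar_coord_of_ne_zero hz
  have hb : |(phi θ).im| ≤ C := (Complex.abs_im_le_norm _).trans (hC _ (mem_range_self θ))
  have hn : ‖Z (r * Real.cos θ, r * Real.sin θ)‖ = Real.exp (-(phi θ).im) * r ^ (mu⁻¹).re := by
    rw [hZ.polar r θ hr, norm_mul, Complex.norm_exp, Complex.norm_exp, Real.rpow_def_of_pos hr,
      div_eq_mul_inv, Complex.re_ofReal_mul, mul_comm]
    simp
  rw [norm_polar_coord hr.le, hn]
  have := abs_le.1 hb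
  constructor <;> gcongr <;> linarith

theorem continuous (hZ : IsPolarExp mu phi Z) (hmu : 0 < mu.re) (hphi : ContDiff ℝ (⊤ : ℕ∞) phi)
    (hper : Function.Periodic phi (2 * Real.pi)) : Continuous Z := by
  rw [continuous_iff_continuousAt]
  intro z
  rcases eq_or_ne z 0 with rfl | hz
  · obtain ⟨C, hC⟩ := hZ.exists_norm_bounds hmu hphi.continuous hper
    have hk := inv_re_pos hmu
    rw [ContinuousAt, hZ.zero]
    refine squeeze_zero_norm (fun z => (hC z).2) ?_
    have : Continuous fun z : ℝ × ℝ =>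
        Real.exp C * ‖equivRealProdCLM.symm z‖ ^ (mu⁻¹).re :=
      continuous_const.mul
        ((equivRealProdCLM.symm.continuous.norm).rpow_const fun _ => Or.inr hk.le)
    simpa only [map_zero, norm_zero, Real.zero_rpow hk.ne', mul_zero] using this.tendsto 0
  · exact (hZ.contDiffAt hphi hz).continuousAt

theorem isClosedMap (hZ : IsPolarExp mu phi Z) (hmu : 0 < mu.re)
    (hphi : ContDiff ℝ (⊤ : ℕ∞) phi) (hper : Function.Periodic phi (2 * Real.pi)) :
    IsClosedMap Z := by
  refine (isProperMap_iff_tendsto_cocompact.2 ⟨hZ.continuous hmu hphi hper, ?_⟩).isClosedMap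
  obtain ⟨C, hC⟩ := hZ.exists_norm_bounds hmu hphi.continuous hper
  refine tendsto_cocompact_of_tendsto_dist_comp_atTop 0 ?_
  simp only [dist_zero_right]
  refine Filter.tendsto_atTop_mono (fun z => (hC z).1) ?_
  refine Filter.Tendsto.const_mul_atTop (Real.exp_pos _) ?_
  exact (tendsto_rpow_atTop (inv_re_pos hmu)).comp ((tendsto_norm_cocompact_atTop (E := ℂ)).comp
    equivRealProdCLM.symm.toHomeomorph.isClosedEmbedding.tendsto_cocompact)

end IsPolarExp

/-- Suppose Re μ > 0.  Then Z_μ is a first integral of L: C^∞ on ℝ²∖{0},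
annihilated by L there, with nowhere vanishing differential, mapping ℝ² onto ℂ;
and if moreover L satisfies condition (P) on ℝ²∖{0}, then Z_μ is a homeomorphism
from ℝ² onto ℂ. -/
theorem stmt_2
    (A B : ℝ × ℝ → ℂ) (lam : ℂ)
    (hA : ContDiffOn ℝ (⊤ : ℕ∞) A {z : ℝ × ℝ | z ≠ 0})
    (hB : ContDiffOn ℝ (⊤ : ℕ∞) B {z : ℝ × ℝ | z ≠ 0})
    (hlam : 1 < lam.re)
    (hAh : ∀ t : ℝ, 0 < t → ∀ z : ℝ × ℝ, A (t • z) = (t : ℂ) ^ lam * A z)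
    (hBh : ∀ t : ℝ, 0 < t → ∀ z : ℝ × ℝ, B (t • z) = (t : ℂ) ^ lam * B z)
    (a b p q : ℝ → ℂ)
    (ha : ∀ θ : ℝ, a θ = A (Real.cos θ, Real.sin θ))
    (hb : ∀ θ : ℝ, b θ = B (Real.cos θ, Real.sin θ))
    (hpdef : ∀ θ : ℝ, p θ = b θ * (Real.cos θ : ℂ) - a θ * (Real.sin θ : ℂ))
    (hqdef : ∀ θ : ℝ, q θ = Complex.I * (a θ * (Real.cos θ : ℂ) + b θ * (Real.sin θ : ℂ)))
    (hC1 : interior {θ : ℝ | (q θ * (starRingEnd ℂ) (p θ)).re = 0} = ∅)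
    (hC2 : ∀ θ : ℝ, p θ ≠ 0)
    (mu : ℂ)
    (hmudef : mu = (1 / (2 * Real.pi)) * ∫ θ in (0:ℝ)..(2 * Real.pi), q θ / p θ)
    (hmupos : 0 < mu.re)
    (phi : ℝ → ℂ)
    (hphiper : Function.Periodic phi (2 * Real.pi))
    (hphider : ∀ θ : ℝ, HasDerivAt phi (q θ / (mu * p θ) - 1) θ)
    (hphimean : (∫ θ in (0:ℝ)..(2 * Real.pi), phi θ) = 0)
    (Z : ℝ × ℝ → ℂ) (hZzero : Z 0 = 0)
    (hZ : ∀ r θ : ℝ, 0 < r → Z (r * Real.cos θ, r * Real.sin θ) =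
      Complex.exp ((Real.log r : ℂ) / mu) * Complex.exp (Complex.I * ((θ : ℂ) + phi θ))) :
    ContDiffOn ℝ (⊤ : ℕ∞) Z {z : ℝ × ℝ | z ≠ 0} ∧
    (∀ z : ℝ × ℝ, z ≠ 0 →
      A z * fderiv ℝ Z z (1, 0) + B z * fderiv ℝ Z z (0, 1) = 0) ∧
    (∀ z : ℝ × ℝ, z ≠ 0 → fderiv ℝ Z z ≠ 0) ∧
    Set.range Z = Set.univ ∧
    (((∀ θ : ℝ, 0 ≤ (q θ * (starRingEnd ℂ) (p θ)).re) ∨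
      (∀ θ : ℝ, (q θ * (starRingEnd ℂ) (p θ)).re ≤ 0)) → IsHomeomorph Z) := by
  have hP : IsPolarExp mu phi Z := ⟨hZzero, hZ⟩
  have hmu0 : mu ≠ 0 := by rintro rfl; simp at hmupos
  have hcirc : ContDiff ℝ (⊤ : ℕ∞) fun θ : ℝ => (Real.cos θ, Real.sin θ) :=
    Real.contDiff_cos.prodMk Real.contDiff_sin
  have hcirc0 : ∀ θ : ℝ, (Real.cos θ, Real.sin θ) ∈ {z : ℝ × ℝ | z ≠ 0} := fun θ h => by
    have h1 := Real.cos_sq_add_sin_sq θ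
    rw [Prod.mk_eq_zero] at h
    simp [h.1, h.2] at h1
  have hasm : ContDiff ℝ (⊤ : ℕ∞) a := by
    rw [funext ha]; exact hA.comp_contDiff hcirc hcirc0
  have hbsm : ContDiff ℝ (⊤ : ℕ∞) b := by
    rw [funext hb]; exact hB.comp_contDiff hcirc hcirc0
  have hcos : ContDiff ℝ (⊤ : ℕ∞) fun θ : ℝ => (Real.cos θ : ℂ) :=
    ofRealCLM.contDiff.comp Real.contDiff_cos
  have hsin : ContDiff ℝ (⊤ : ℕ∞) fun θ : ℝ => (Real.sin θ : ℂ) :=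
    ofRealCLM.contDiff.comp Real.contDiff_sin
  have hpsm : ContDiff ℝ (⊤ : ℕ∞) p := by
    rw [funext hpdef]; exact (hbsm.mul hcos).sub (hasm.mul hsin)
  have hqsm : ContDiff ℝ (⊤ : ℕ∞) q := by
    rw [funext hqdef]; exact contDiff_const.mul ((hasm.mul hcos).add (hbsm.mul hsin))
  have hphi : ContDiff ℝ (⊤ : ℕ∞) phi := by
    refine contDiff_infty_iff_deriv.2 ⟨fun θ => (hphider θ).differentiableAt, ?_⟩
    rw [funext fun θ => (hphider θ).deriv]
    simp only [div_eq_mul_inv]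
    exact (hqsm.mul ((contDiff_const.mul hpsm).inv fun θ => mul_ne_zero hmu0 (hC2 θ))).sub
      contDiff_const
  have hdiff : ∀ z : ℝ × ℝ, z ≠ 0 → DifferentiableAt ℝ Z z := fun z hz =>
    (hP.contDiffAt hphi hz).differentiableAt (by simp)
  refine ⟨fun z hz => (hP.contDiffAt hphi hz).contDiffWithinAt, fun z hz => ?_, fun z hz h0 => ?_,
    (hP.surjective hmupos hphi.continuous hphiper).range_eq, fun hsign => ?_⟩
  · obtain ⟨r, θ, hr, rfl⟩ := exists_polar_coord_of_ne_zero hz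
    have hU := hP.fderiv_radial hr (hdiff _ hz)
    have hV := hP.fderiv_angular hr (hphider θ) (hdiff _ hz)
    have hAz : A (r * Real.cos θ, r * Real.sin θ) = (r : ℂ) ^ lam * a θ := by
      rw [ha, ← hAh r hr]; rfl
    have hBz : B (r * Real.cos θ, r * Real.sin θ) = (r : ℂ) ^ lam * b θ := by
      rw [hb, ← hBh r hr]; rfl
    rw [hAz, hBz]
    generalize Z (r * Real.cos θ, r * Real.sin θ) = ζ at hU hV
    generalize fderiv ℝ Z (r * Real.cos θ, r * Real.sin θ) = D at hU hV ⊢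
    have hD : ∀ x y : ℝ, D (x, y) = x * D (1, 0) + y * D (0, 1) := fun x y => by
      rw [← real_smul, ← real_smul, ← map_smul, ← map_smul, ← map_add]
      simp
    rw [hD] at hU hV
    push_cast at hU hV
    have hr0 : (r : ℂ) ≠ 0 := by exact_mod_cast hr.ne'
    have hcs : (Complex.cos θ) ^ 2 + (Complex.sin θ) ^ 2 = 1 := Complex.cos_sq_add_sin_sq _
    have hp0 := hC2 θ
    have hpθ := hpdef θ
    have hqθ := hqdef θ
    push_cast at hpθ hqθ
    set c := Complex.cos θ
    set s := Complex.sin θ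
    set X := D (1, 0)
    set Y := D (0, 1)
    have hU' : mu * r * (c * X + s * Y) = ζ := by
      rw [hU]; field_simp
    have hV' : mu * r * p θ * (-s * X + c * Y) = Complex.I * q θ * ζ := by
      have : r * (-s * X + c * Y) = Complex.I * (q θ / (mu * p θ)) * ζ := by
        linear_combination hV
      calc mu * r * p θ * (-s * X + c * Y) = mu * p θ * (r * (-s * X + c * Y)) := by ring
        _ = _ := by rw [this]; field_simp
    have hmain : mu * r * (a θ * X + b θ * Y) = 0 := by
      linear_combination (a θ * c + b θ * s) * hU' + hV' - mu * r * (-s * X + c * Y) * hpθ +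
        Complex.I * ζ * hqθ + ζ * (a θ * c + b θ * s) * Complex.I_sq -
        mu * r * (a θ * X + b θ * Y) * hcs
    have : a θ * X + b θ * Y = 0 := by
      simpa [hmu0, hr0] using hmain
    linear_combination (r : ℂ) ^ lam * this
  · obtain ⟨r, θ, hr, rfl⟩ := exists_polar_coord_of_ne_zero hz
    have hU := hP.fderiv_radial hr (hdiff _ hz)
    have hr0 : (r : ℂ) ≠ 0 := by exact_mod_cast hr.ne'
    rw [h0, zero_apply] at hU
    exact div_ne_zero (hP.apply_ne_zero hz) (mul_ne_zero hmu0 hr0) hU.symm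
  · refine isHomeomorph_iff_continuous_isClosedMap_bijective.2
      ⟨hP.continuous hmupos hphi hphiper, hP.isClosedMap hmupos hphi hphiper,
        hP.injective hmu0 hphiper ?_, hP.surjective hmupos hphi.continuous hphiper⟩
    have hquot : ∀ θ, (q θ / p θ).re = (q θ * (starRingEnd ℂ) (p θ)).re / normSq (p θ) :=
      fun θ => by
        rw [div_eq_mul_inv, Complex.inv_def, ← mul_assoc, Complex.re_mul_ofReal, div_eq_mul_inv]
    have hns : ∀ θ, 0 < normSq (p θ) := fun θ => normSq_pos.2 (hC2 θ)
    have hder : ∀ θ : ℝ, HasDerivAt (fun θ : ℝ => (mu * ((θ : ℂ) + phi θ)).re)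
        (q θ / p θ).re θ := fun θ => by
      have h1 := (((hasDerivAt_id θ).ofReal_comp).add (hphider θ)).const_mul mu
      have h2 := reCLM.hasFDerivAt.comp_hasDerivAt θ h1
      have hp0 := hC2 θ
      have hval : mu * (((1 : ℝ) : ℂ) + (q θ / (mu * p θ) - 1)) = q θ / p θ := by
        push_cast
        field_simp
        ring
      rw [hval] at h2
      exact h2
    have hint : interior {θ : ℝ | (q θ / p θ).re = 0} = ∅ := by
      simpa only [hquot, div_eq_zero_iff, (hns _).ne', or_false] using hC1
    rcases hsign with h | h
    · exact (strictMono_of_hasDerivAt_nonneg hder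
        (fun θ => by rw [hquot]; exact div_nonneg (h θ) (hns θ).le) hint).injective
    · have hneg := strictMono_of_hasDerivAt_nonneg (fun θ => (hder θ).neg)
        (fun θ => by
          rw [hquot, neg_nonneg]; exact div_nonpos_of_nonpos_of_nonneg (h θ) (hns θ).le)
        (by simpa only [neg_eq_zero] using hint)
      exact fun x y hxy => hneg.injective (congrArg Neg.neg hxy)
end

section
/- Suppose L satisfies condition (P) in ℝ²∖{0} (so that Re μ > 0 and Z_μ : ℝ² → ℂ is a homeomorphism). Let Ω ⊆ ℝ² be open. Then a function u ∈ C⁰(Ω) that is C¹ on Ω∖{0} satisfies Lu = 0 pointwise on Ω∖{0} if and only if there exists a holomorphic function H on the open set Z_μ(Ω) such that u = H ∘ Z_μ on Ω. -/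
open Real Complex Set Filter Topology
open scoped Interval

/-- A Morera argument for a Cauchy-Riemann equation that may degenerate: if `R` is an increasing
homeomorphism of `ℝ` with inverse `T`, and `∂v/∂θ = i R'(θ) ∂v/∂σ`, then
`σ + iR(θ) ↦ v (σ, θ)` is holomorphic, even across the zeros of `R'`. -/
lemma differentiableOn_of_degenerate_cauchyRiemann {R R' T : ℝ → ℝ}
    (hR : ∀ t, HasDerivAt R (R' t) t) (hR' : Differentiable ℝ R') (hmono : Monotone R)
    (hT : Continuous T) (hTR : ∀ t, T (R t) = t) (hRT : ∀ t, R (T t) = t)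
    {V : Set (ℝ × ℝ)} (hV : IsOpen V) {v : ℝ × ℝ → ℂ} (hv : DifferentiableOn ℝ v V)
    (hCR : ∀ x ∈ V, fderiv ℝ v x (0, 1) = I * R' x.2 * fderiv ℝ v x (1, 0)) :
    DifferentiableOn ℂ (fun ζ : ℂ => v (ζ.re, T ζ.im)) {ζ : ℂ | (ζ.re, T ζ.im) ∈ V} := by
  have hΨ : Continuous fun ζ : ℂ => (ζ.re, T ζ.im) := by fun_prop
  refine (isConservativeOn_and_continuousOn_iff_isDifferentiableOn (hV.preimage hΨ)).mp
    ⟨fun z w hzw => ?_, hv.continuousOn.comp hΨ.continuousOn fun _ h => h⟩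
  rw [← add_eq_zero_iff_eq_neg, wedgeIntegral_add_wedgeIntegral_eq]
  have hsub : [[z.re, w.re]] ×ˢ [[T z.im, T w.im]] ⊆ V := by
    rintro ⟨s, t⟩ ⟨hs, ht⟩
    have h1 : R t ∈ [[z.im, w.im]] := by
      have := hmono.mapsTo_uIcc ht
      rwa [hRT, hRT] at this
    have h2 : (⟨s, R t⟩ : ℂ) ∈ Rectangle z w := ⟨hs, h1⟩
    have h3 := hzw h2
    simpa [hTR] using h3
  have hd : ∀ x ∈ V, HasFDerivAt v (fderiv ℝ v x) x := fun x hx =>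
    (hv.differentiableAt (hV.mem_nhds hx)).hasFDerivAt
  have hdR : ∀ x : ℝ × ℝ, HasFDerivAt (fun x : ℝ × ℝ => -(I * (R' x.2 : ℂ)))
      (-(I • ofRealCLM.comp ((deriv R' x.2) • ContinuousLinearMap.snd ℝ ℝ ℝ))) x := by
    intro x
    have h1 : HasFDerivAt (fun x : ℝ × ℝ => R' x.2)
        ((deriv R' x.2) • ContinuousLinearMap.snd ℝ ℝ ℝ) x :=
      (hR' x.2).hasDerivAt.comp_hasFDerivAt x hasFDerivAt_snd
    exact ((ofRealCLM.hasFDerivAt.comp x h1).const_mul I).neg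
  have hzero : ∀ x ∈ V, ((-(I * (R' x.2 : ℂ))) • fderiv ℝ v x +
      ContinuousLinearMap.smulRight (-(I • ofRealCLM.comp
        ((deriv R' x.2) • ContinuousLinearMap.snd ℝ ℝ ℝ))) (v x)) (1, 0) +
      fderiv ℝ v x (0, 1) = 0 := by
    intro x hx
    rw [hCR x hx]
    simp
  have hinside : Ioo (min z.re w.re) (max z.re w.re) ×ˢ
      Ioo (min (T z.im) (T w.im)) (max (T z.im) (T w.im)) ⊆ V :=
    (Set.prod_mono Ioo_subset_Icc_self Ioo_subset_Icc_self).trans hsub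
  have hcR : Continuous fun x : ℝ × ℝ => -(I * (R' x.2 : ℂ)) := by
    have := hR'.continuous
    fun_prop
  have hdiv := MeasureTheory.integral2_divergence_prod_of_hasFDerivAt
    (fun x => (-(I * (R' x.2 : ℂ))) • v x) v
    (fun x => (-(I * (R' x.2 : ℂ))) • fderiv ℝ v x +
      ContinuousLinearMap.smulRight (-(I • ofRealCLM.comp
        ((deriv R' x.2) • ContinuousLinearMap.snd ℝ ℝ ℝ))) (v x))
    (fderiv ℝ v) z.re (T z.im) w.re (T w.im)
    (hcR.continuousOn.smul (hv.continuousOn.mono hsub))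
    (hv.continuousOn.mono hsub)
    (fun x hx => (hdR x).smul (hd x (hinside hx)))
    (fun x hx => hd x (hinside hx))
    (MeasureTheory.integrableOn_zero.congr_fun (fun x hx => (hzero x (hsub hx)).symm)
      (measurableSet_uIcc.prod measurableSet_uIcc))
  have hleft : (∫ x in z.re..w.re, ∫ y in T z.im..T w.im,
      ((-(I * (R' (x, y).2 : ℂ))) • fderiv ℝ v (x, y) +
      ContinuousLinearMap.smulRight (-(I • ofRealCLM.comp
        ((deriv R' (x, y).2) • ContinuousLinearMap.snd ℝ ℝ ℝ))) (v (x, y))) (1, 0) +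
      fderiv ℝ v (x, y) (0, 1)) = 0 := by
    rw [intervalIntegral.integral_congr (g := fun _ => 0)]
    · simp
    intro x hx
    dsimp only
    rw [intervalIntegral.integral_congr (g := fun _ => 0)]
    · simp
    intro y hy
    exact hzero (x, y) (hsub ⟨hx, hy⟩)
  have hsubst : ∀ s ∈ [[z.re, w.re]], ∫ y in z.im..w.im, v (s, T y) =
      ∫ t in T z.im..T w.im, (R' t : ℂ) * v (s, t) := by
    intro s hs
    have key := intervalIntegral.integral_deriv_smul_comp' (a := T z.im) (b := T w.im)
      (f := R) (f' := R') (g := fun y => v (s, T y)) (fun x _ => hR x)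
      hR'.continuous.continuousOn (by
        refine hv.continuousOn.comp (by fun_prop) ?_
        rintro _ ⟨t, ht, rfl⟩
        exact hsub ⟨hs, by simpa [hTR] using ht⟩)
    rw [hRT, hRT] at key
    rw [← key]
    simp [hTR]
  rw [hleft] at hdiv
  simp only [smul_eq_mul, neg_mul, mul_assoc, intervalIntegral.integral_neg,
    intervalIntegral.integral_const_mul] at hdiv
  simp only [add_re, ofReal_re, mul_re, I_re, mul_zero, ofReal_im, I_im, mul_one, sub_self,
    add_zero, add_im, mul_im, zero_add, smul_eq_mul]
  rw [hsubst _ left_mem_uIcc, hsubst _ right_mem_uIcc]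
  linear_combination hdiv

/-- Polar coordinates with `log r = σ + M θ`. -/
noncomputable def skewPolar (M : ℝ → ℝ) (x : ℝ × ℝ) : ℝ × ℝ :=
  (Real.exp (x.1 + M x.2) * Real.cos x.2, Real.exp (x.1 + M x.2) * Real.sin x.2)

lemma skewPolar_ne_zero (M : ℝ → ℝ) (x : ℝ × ℝ) : skewPolar M x ≠ 0 := by
  intro h
  simp only [skewPolar, Prod.mk_eq_zero, mul_eq_zero, Real.exp_ne_zero, false_or] at h
  have := Real.sin_sq_add_cos_sq x.2
  simp [h.1, h.2] at this

lemma exists_skewPolar_eq (M : ℝ → ℝ) {z : ℝ × ℝ} (hz : z ≠ 0) : ∃ x, skewPolar M x = z := by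
  set w : ℂ := ⟨z.1, z.2⟩ with hw
  have hw0 : w ≠ 0 := fun h => hz (Prod.ext (congrArg re h) (congrArg im h))
  refine ⟨(Real.log ‖w‖ - M (arg w), arg w), ?_⟩
  simp only [skewPolar, sub_add_cancel, Real.exp_log (norm_pos_iff.mpr hw0),
    norm_mul_cos_arg, norm_mul_sin_arg]
  rfl

lemma continuous_skewPolar {M : ℝ → ℝ} (hM : Continuous M) : Continuous (skewPolar M) := by
  unfold skewPolar
  fun_prop

lemma hasFDerivAt_skewPolar {M : ℝ → ℝ} {M' : ℝ} {x : ℝ × ℝ} (hM : HasDerivAt M M' x.2) :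
    HasFDerivAt (skewPolar M)
      (((ContinuousLinearMap.fst ℝ ℝ ℝ) + M' • ContinuousLinearMap.snd ℝ ℝ ℝ).smulRight
          (skewPolar M x) +
        (ContinuousLinearMap.snd ℝ ℝ ℝ).smulRight
          (Real.exp (x.1 + M x.2) • (-Real.sin x.2, Real.cos x.2))) x := by
  have h1 : HasFDerivAt (fun x : ℝ × ℝ => Real.exp (x.1 + M x.2)) _ x :=
    (hasFDerivAt_fst.add (hM.comp_hasFDerivAt x hasFDerivAt_snd)).exp
  have hc : HasFDerivAt (fun x : ℝ × ℝ => Real.cos x.2) _ x := hasFDerivAt_snd.cos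
  have hs : HasFDerivAt (fun x : ℝ × ℝ => Real.sin x.2) _ x := hasFDerivAt_snd.sin
  refine ((h1.mul hc).prodMk (h1.mul hs)).congr_fderiv ?_
  ext <;> simp [skewPolar] <;> ring

lemma fderiv_comp_skewPolar_fst {M : ℝ → ℝ} {M' : ℝ} {x : ℝ × ℝ} (hM : HasDerivAt M M' x.2)
    {u : ℝ × ℝ → ℂ} (hu : DifferentiableAt ℝ u (skewPolar M x)) :
    fderiv ℝ (u ∘ skewPolar M) x (1, 0) = fderiv ℝ u (skewPolar M x) (skewPolar M x) := by
  rw [(hu.hasFDerivAt.comp x (hasFDerivAt_skewPolar hM)).fderiv]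
  simp

lemma fderiv_comp_skewPolar_snd {M : ℝ → ℝ} {M' : ℝ} {x : ℝ × ℝ} (hM : HasDerivAt M M' x.2)
    {u : ℝ × ℝ → ℂ} (hu : DifferentiableAt ℝ u (skewPolar M x)) :
    fderiv ℝ (u ∘ skewPolar M) x (0, 1) = M' * fderiv ℝ u (skewPolar M x) (skewPolar M x) +
      Real.exp (x.1 + M x.2) *
        fderiv ℝ u (skewPolar M x) (-Real.sin x.2, Real.cos x.2) := by
  rw [(hu.hasFDerivAt.comp x (hasFDerivAt_skewPolar hM)).fderiv]
  simp only [ContinuousLinearMap.comp_apply, add_apply,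
    ContinuousLinearMap.smulRight_apply, smul_apply,
    ContinuousLinearMap.coe_fst', ContinuousLinearMap.coe_snd', map_add, map_smul,
    real_smul, smul_eq_mul]
  simp

lemma clm_prod_apply (f : ℝ × ℝ →L[ℝ] ℂ) (s t : ℝ) :
    f (s, t) = s * f (1, 0) + t * f (0, 1) := by
  have : (s, t) = s • ((1 : ℝ), (0 : ℝ)) + t • ((0 : ℝ), (1 : ℝ)) := by simp
  rw [this, map_add, map_smul, map_smul, real_smul, real_smul]

/-- In skew polar coordinates adapted to `L = A∂ₓ + B∂ᵧ`, the equation `Lu = 0` is a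
(possibly degenerate) Cauchy-Riemann equation. -/
lemma vectorField_eq_zero_iff_skewPolar {A B : ℝ × ℝ → ℂ} {lam : ℂ}
    (hAh : ∀ t : ℝ, 0 < t → ∀ z : ℝ × ℝ, A (t • z) = (t : ℂ) ^ lam * A z)
    (hBh : ∀ t : ℝ, 0 < t → ∀ z : ℝ × ℝ, B (t • z) = (t : ℂ) ^ lam * B z)
    {M : ℝ → ℝ} {M' R' : ℝ} {x : ℝ × ℝ} (hM : HasDerivAt M M' x.2) {p q : ℂ} (hp0 : p ≠ 0)
    (hp : p = B (Real.cos x.2, Real.sin x.2) * (Real.cos x.2 : ℂ) -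
      A (Real.cos x.2, Real.sin x.2) * (Real.sin x.2 : ℂ))
    (hq : q = I * (A (Real.cos x.2, Real.sin x.2) * (Real.cos x.2 : ℂ) +
      B (Real.cos x.2, Real.sin x.2) * (Real.sin x.2 : ℂ)))
    (hpq : q / p = R' + M' * I)
    {u : ℝ × ℝ → ℂ} (hu : DifferentiableAt ℝ u (skewPolar M x)) :
    A (skewPolar M x) * fderiv ℝ u (skewPolar M x) (1, 0) +
        B (skewPolar M x) * fderiv ℝ u (skewPolar M x) (0, 1) = 0 ↔
      fderiv ℝ (u ∘ skewPolar M) x (0, 1) =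
        I * R' * fderiv ℝ (u ∘ skewPolar M) x (1, 0) := by
  rw [fderiv_comp_skewPolar_fst hM hu, fderiv_comp_skewPolar_snd hM hu]
  set f := fderiv ℝ u (skewPolar M x)
  have hz : skewPolar M x = Real.exp (x.1 + M x.2) • (Real.cos x.2, Real.sin x.2) := by
    simp [skewPolar]
  have hr : 0 < Real.exp (x.1 + M x.2) := Real.exp_pos _
  generalize Real.exp (x.1 + M x.2) = r at hz hr ⊢
  rw [hz, hAh r hr, hBh r hr, map_smul, clm_prod_apply f (Real.cos x.2), clm_prod_apply f (-_)]
  have hsc : (Real.sin x.2 : ℂ) ^ 2 + (Real.cos x.2 : ℂ) ^ 2 = 1 := by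
    exact_mod_cast Real.sin_sq_add_cos_sq x.2
  generalize A (Real.cos x.2, Real.sin x.2) = a at *
  generalize B (Real.cos x.2, Real.sin x.2) = b at *
  push_cast [-ofReal_cos, -ofReal_sin]
  generalize (Real.cos x.2 : ℂ) = c at *
  generalize (Real.sin x.2 : ℂ) = s at *
  generalize f (1, 0) = X
  generalize f (0, 1) = Y
  have hrc : (r : ℂ) ≠ 0 := ofReal_ne_zero.mpr hr.ne'
  have hrl : (r : ℂ) ^ lam ≠ 0 := by simp [cpow_eq_zero_iff, hrc]
  have hq' : q = p * (R' + M' * I) := by rw [← hpq]; field_simp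
  have e1 : a * X + b * Y = p * (-s * X + c * Y) - I * q * (c * X + s * Y) := by
    rw [hp, hq]
    linear_combination (-(a * X + b * Y)) * hsc + (a * c + b * s) * (c * X + s * Y) * I_sq
  have e2 : a * X + b * Y = p * ((-s * X + c * Y) - I * (R' + M' * I) * (c * X + s * Y)) := by
    rw [e1, hq']; ring
  have e3 : (r : ℂ) ^ lam * a * X + (r : ℂ) ^ lam * b * Y = (r : ℂ) ^ lam * p *
      ((-s * X + c * Y) - I * (R' + M' * I) * (c * X + s * Y)) := by
    linear_combination (r : ℂ) ^ lam * e2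
  rw [e3, mul_eq_zero, or_iff_right (mul_ne_zero hrl hp0), ← sub_eq_zero (b := I * _ * _),
    real_smul]
  have e4 : ↑M' * (↑r * (c * X + s * Y)) + ↑r * (-s * X + c * Y) -
      I * ↑R' * (↑r * (c * X + s * Y)) =
      r * ((-s * X + c * Y) - I * (R' + M' * I) * (c * X + s * Y)) := by
    linear_combination (r * M' * (c * X + s * Y)) * I_sq
  rw [e4, mul_eq_zero, or_iff_right hrc]

/-- A function with nonnegative derivative is strictly increasing when the zero set of the
derivative has empty interior. -/
lemma strictMono_of_hasDerivAt_nonneg_s4 {R R' : ℝ → ℝ} (hR : ∀ t, HasDerivAt R (R' t) t)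
    (h0 : ∀ t, 0 ≤ R' t) (hint : interior {t | R' t = 0} = ∅) : StrictMono R := by
  have hmono : Monotone R :=
    monotone_of_deriv_nonneg (fun t => (hR t).differentiableAt) fun t => (hR t).deriv ▸ h0 t
  refine hmono.strictMono_of_injective fun x y hxy => ?_
  by_contra hne
  wlog hlt : x < y generalizing x y
  · exact this y x hxy.symm (Ne.symm hne) (lt_of_le_of_ne (not_lt.mp hlt) (Ne.symm hne))
  have hsub : Ioo x y ⊆ {t | R' t = 0} := by
    intro t ht
    have hev : R =ᶠ[𝓝 t] fun _ => R x := by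
      filter_upwards [isOpen_Ioo.mem_nhds ht] with s hs
      exact le_antisymm (hxy ▸ hmono hs.2.le) (hmono hs.1.le)
    exact (hR t).unique ((hasDerivAt_const t (R x)).congr_of_eventuallyEq hev)
  have := interior_mono hsub
  rw [hint, isOpen_Ioo.interior_eq] at this
  exact this (show (x + y) / 2 ∈ Ioo x y from ⟨by linarith, by linarith⟩)

/-- A strictly increasing continuous function at bounded distance from a linear function of positive
slope has a continuous inverse. -/
lemma exists_continuous_inverse {R : ℝ → ℝ} (hRc : Continuous R) (hR : StrictMono R) {m C : ℝ}
    (hm : 0 < m) (hC : ∀ t, |R t - m * t| ≤ C) :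
    ∃ T : ℝ → ℝ, Continuous T ∧ (∀ t, T (R t) = t) ∧ ∀ t, R (T t) = t := by
  have hsurj : Function.Surjective R := by
    refine hRc.surjective ?_ ?_
    · refine tendsto_atTop_mono (f := fun t => m * t + -C)
        (fun t => by linarith [(abs_le.mp (hC t)).1]) ?_
      exact tendsto_atTop_add_const_right _ _ (tendsto_id.const_mul_atTop hm)
    · refine tendsto_atBot_mono (f := fun t => m * t + C)
        (fun t => by linarith [(abs_le.mp (hC t)).2]) ?_
      exact tendsto_atBot_add_const_right _ _ (tendsto_id.const_mul_atBot hm)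
  let e := hR.orderIsoOfSurjective R hsurj
  exact ⟨e.symm, e.symm.continuous, fun t => e.symm_apply_apply t, fun t => e.apply_symm_apply t⟩

section FirstIntegral

variable {M R : ℝ → ℝ} {mu : ℂ} {Z : ℝ × ℝ → ℂ}

lemma firstIntegral_injective (hmu : mu ≠ 0) (hR : Function.Injective R)
    (hRper : ∀ (t : ℝ) (n : ℤ), R (t + n * (2 * π)) = R t + n * (2 * π) * mu.re)
    (hMper : ∀ (t : ℝ) (n : ℤ), M (t + n * (2 * π)) = M t + n * (2 * π) * mu.im)
    (hZ0 : Z 0 = 0)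
    (hZ : ∀ x, Z (skewPolar M x) = Complex.exp ((x.1 + R x.2 * I) / mu)) :
    Function.Injective Z := by
  have hne : ∀ z, z ≠ 0 → Z z ≠ 0 := by
    intro z hz
    obtain ⟨x, rfl⟩ := exists_skewPolar_eq M hz
    rw [hZ]
    exact Complex.exp_ne_zero _
  intro z z' h
  by_cases hz : z = 0
  · by_contra hz'
    subst hz
    exact hne z' (Ne.symm hz') (by rw [← h, hZ0])
  by_cases hz' : z' = 0
  · subst hz'
    exact absurd (by rw [h, hZ0]) (hne z hz)
  obtain ⟨x, rfl⟩ := exists_skewPolar_eq M hz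
  obtain ⟨y, rfl⟩ := exists_skewPolar_eq M hz'
  rw [hZ, hZ, Complex.exp_eq_exp_iff_exists_int] at h
  obtain ⟨n, hn⟩ := h
  have hn' : (x.1 + R x.2 * I : ℂ) = y.1 + R y.2 * I + n * (2 * π) * I * mu := by
    field_simp at hn
    linear_combination hn
  have hre := congrArg re hn'
  have him := congrArg im hn'
  simp at hre him
  have h2 : x.2 = y.2 + n * (2 * π) := hR (by rw [hRper]; linarith)
  have h1 : x.1 + M x.2 = y.1 + M y.2 := by rw [h2, hMper]; linarith
  simp only [skewPolar, h1]
  rw [h2, Real.cos_add_int_mul_two_pi, Real.sin_add_int_mul_two_pi]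

lemma nhds_firstIntegral_le {T : ℝ → ℝ} (hmu : mu ≠ 0) (hMc : Continuous M) (hT : Continuous T)
    (hTR : ∀ t, T (R t) = t) (hRT : ∀ t, R (T t) = t) {α C : ℝ} (hα : 0 < α) (hZ0 : Z 0 = 0)
    (hZ : ∀ x, Z (skewPolar M x) = Complex.exp ((x.1 + R x.2 * I) / mu))
    (hlow : ∀ x : ℝ × ℝ, Real.exp (α * (x.1 + M x.2) - C) ≤ ‖Z (skewPolar M x)‖) (z : ℝ × ℝ) :
    𝓝 (Z z) ≤ map Z (𝓝 z) := by
  have hZΨ : ∀ ζ : ℂ, Z (skewPolar M (ζ.re, T ζ.im)) = Complex.exp (ζ / mu) := by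
    intro ζ
    rw [hZ, hRT, re_add_im]
  by_cases hz : z = 0
  · subst hz
    rw [hZ0]
    intro t ht
    obtain ⟨ε, hε, hball⟩ := Metric.mem_nhds_iff.mp (mem_map.mp ht)
    refine Metric.mem_nhds_iff.mpr ⟨Real.exp (α * Real.log ε - C), Real.exp_pos _, fun w hw => ?_⟩
    by_cases hw0 : w = 0
    · subst hw0
      have := hball (Metric.mem_ball_self hε)
      rwa [mem_preimage, hZ0] at this
    have hwζ : w = Z (skewPolar M ((mu * Complex.log w).re, T (mu * Complex.log w).im)) := by
      rw [hZΨ, mul_div_cancel_left₀ _ hmu, Complex.exp_log hw0]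
    generalize ((mu * Complex.log w).re, T (mu * Complex.log w).im) = x at hwζ
    subst hwζ
    refine hball ?_
    have h1 := (hlow x).trans_lt (mem_ball_zero_iff.mp hw)
    have h2 : x.1 + M x.2 < Real.log ε := by
      have := Real.exp_lt_exp.mp h1
      exact lt_of_mul_lt_mul_left (by linarith) hα.le
    have h3 : Real.exp (x.1 + M x.2) < ε := (Real.lt_log_iff_exp_lt hε).mp h2
    rw [mem_ball_zero_iff, Prod.norm_def, max_lt_iff]
    constructor
    · refine lt_of_le_of_lt ?_ h3
      simp only [skewPolar, norm_mul, Real.norm_eq_abs, abs_of_pos (Real.exp_pos _)]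
      exact mul_le_of_le_one_right (Real.exp_pos _).le (Real.abs_cos_le_one _)
    · refine lt_of_le_of_lt ?_ h3
      simp only [skewPolar, norm_mul, Real.norm_eq_abs, abs_of_pos (Real.exp_pos _)]
      exact mul_le_of_le_one_right (Real.exp_pos _).le (Real.abs_sin_le_one _)
  obtain ⟨x, rfl⟩ := exists_skewPolar_eq M hz
  set ζ : ℂ := ⟨x.1, R x.2⟩ with hζ
  have hx : (ζ.re, T ζ.im) = x := by simp [hζ, hTR]
  have hder : HasStrictDerivAt (fun ζ : ℂ => Complex.exp (ζ / mu))
      (Complex.exp (ζ / mu) * (1 / mu)) ζ :=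
    ((hasStrictDerivAt_id ζ).div_const mu).cexp
  have hmap := hder.map_nhds_eq (mul_ne_zero (Complex.exp_ne_zero _) (one_div_ne_zero hmu))
  have hcont : Tendsto (fun ζ : ℂ => skewPolar M (ζ.re, T ζ.im)) (𝓝 ζ) (𝓝 (skewPolar M x)) := by
    have := ((continuous_skewPolar hMc).comp
      (show Continuous fun ζ : ℂ => (ζ.re, T ζ.im) by fun_prop)).tendsto ζ
    simpa only [Function.comp_def, hx] using this
  calc 𝓝 (Z (skewPolar M x)) = map (fun ζ : ℂ => Complex.exp (ζ / mu)) (𝓝 ζ) := by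
        rw [hmap, ← hZΨ, hx]
    _ = map Z (map (fun ζ : ℂ => skewPolar M (ζ.re, T ζ.im)) (𝓝 ζ)) := by
        rw [map_map]
        exact congrArg (map · _) (funext fun ζ => (hZΨ ζ).symm)
    _ ≤ map Z (𝓝 (skewPolar M x)) := map_mono hcont

/-- Continuous solutions of the Cauchy-Riemann equation in skew polar coordinates are exactly the
holomorphic functions of the first integral `Z`. -/
lemma cauchyRiemann_iff_exists_comp_firstIntegral {M' R' T : ℝ → ℝ} (hmu : mu ≠ 0)
    (hM : ∀ t, HasDerivAt M (M' t) t) (hR : ∀ t, HasDerivAt R (R' t) t)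
    (hR' : Differentiable ℝ R') (hmono : Monotone R) (hT : Continuous T)
    (hTR : ∀ t, T (R t) = t) (hRT : ∀ t, R (T t) = t)
    (hZ : ∀ x, Z (skewPolar M x) = Complex.exp ((x.1 + R x.2 * I) / mu))
    (hinj : Function.Injective Z) (hopen : ∀ z, 𝓝 (Z z) ≤ map Z (𝓝 z))
    {Ω : Set (ℝ × ℝ)} (hΩ : IsOpen Ω) {u : ℝ × ℝ → ℂ} (huc : ContinuousOn u Ω)
    (hu : DifferentiableOn ℝ u (Ω \ {0})) :
    (∀ x, skewPolar M x ∈ Ω → fderiv ℝ (u ∘ skewPolar M) x (0, 1) =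
        I * R' x.2 * fderiv ℝ (u ∘ skewPolar M) x (1, 0)) ↔
      ∃ H : ℂ → ℂ, DifferentiableOn ℂ H (Z '' Ω) ∧ ∀ z ∈ Ω, u z = H (Z z) := by
  have hMc : Continuous M := continuous_iff_continuousAt.mpr fun t => (hM t).continuousAt
  have hPc := continuous_skewPolar hMc
  have hnhds : ∀ z ∈ Ω, Z '' Ω ∈ 𝓝 (Z z) := fun z hz =>
    hopen z (image_mem_map (hΩ.mem_nhds hz))
  have hV : IsOpen (skewPolar M ⁻¹' Ω) := hΩ.preimage hPc
  have hud : ∀ x, skewPolar M x ∈ Ω → DifferentiableAt ℝ (u ∘ skewPolar M) x := fun x hx =>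
    (hu.differentiableAt ((hΩ.sdiff isClosed_singleton).mem_nhds
      ⟨hx, skewPolar_ne_zero M x⟩)).comp x (hasFDerivAt_skewPolar (hM x.2)).differentiableAt
  constructor
  · intro hCR
    have hZΨ : ∀ ζ : ℂ, Z (skewPolar M (ζ.re, T ζ.im)) = Complex.exp (ζ / mu) := by
      intro ζ
      rw [hZ, hRT, re_add_im]
    have hhol := differentiableOn_of_degenerate_cauchyRiemann hR hR' hmono hT hTR hRT hV
      (fun x hx => (hud x hx).differentiableWithinAt) hCR
    have hUo : IsOpen {ζ : ℂ | (ζ.re, T ζ.im) ∈ skewPolar M ⁻¹' Ω} :=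
      hV.preimage (show Continuous fun ζ : ℂ => (ζ.re, T ζ.im) by fun_prop)
    set H : ℂ → ℂ := u ∘ Function.invFun Z with hH
    have hHZ : ∀ z, H (Z z) = u z := fun z =>
      congrArg u (Function.leftInverse_invFun hinj z)
    have hoff : ∀ z ∈ Ω, z ≠ 0 → DifferentiableAt ℂ H (Z z) := by
      intro z hz hz0
      obtain ⟨x, rfl⟩ := exists_skewPolar_eq M hz0
      set ζ : ℂ := ⟨x.1, R x.2⟩ with hζ
      have hx : (ζ.re, T ζ.im) = x := by simp [hζ, hTR]
      have hw : Z (skewPolar M x) = Complex.exp (ζ / mu) := by rw [← hZΨ, hx]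
      rw [hw]
      set w := Complex.exp (ζ / mu) with hwdef
      have hw0 : w ≠ 0 := Complex.exp_ne_zero _
      let g : ℂ → ℂ := fun y => ζ + mu * Complex.log (y / w)
      have hgw : g w = ζ := by simp [g, hw0]
      have hg : DifferentiableAt ℂ g w := by
        have h1 : w / w ∈ slitPlane := by simp [hw0]
        have h2 : DifferentiableAt ℂ (fun y : ℂ => y / w) w := by fun_prop
        exact ((h2.clog h1).const_mul mu).const_add ζ
      have hcomp : DifferentiableAt ℂ
          ((fun ζ : ℂ => (u ∘ skewPolar M) (ζ.re, T ζ.im)) ∘ g) w := by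
        refine DifferentiableAt.comp w ?_ hg
        rw [hgw]
        exact hhol.differentiableAt (hUo.mem_nhds (by
          rw [mem_ofPred_eq, hx]
          exact hz))
      refine hcomp.congr_of_eventuallyEq ?_
      filter_upwards [isOpen_ne.mem_nhds hw0] with y hy
      have : y = Complex.exp (g y / mu) := by
        rw [add_div, mul_div_cancel_left₀ _ hmu, Complex.exp_add,
          Complex.exp_log (div_ne_zero hy hw0), ← hwdef, mul_div_cancel₀ _ hw0]
      conv_lhs => rw [this, ← hZΨ, hHZ]
      rfl
    refine ⟨H, ?_, fun z _ => (hHZ z).symm⟩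
    rintro _ ⟨z, hz, rfl⟩
    by_cases hz0 : z = 0
    · subst hz0
      refine (differentiableOn_compl_singleton_and_continuousAt_iff (hnhds 0 hz)).mp
        ⟨?_, ?_⟩ _ (mem_image_of_mem Z hz)
      · rintro _ ⟨⟨y, hy, rfl⟩, hne⟩
        exact (hoff y hy fun h => hne (by rw [h]; rfl)).differentiableWithinAt
      · have h1 : Tendsto (H ∘ Z) (𝓝 0) (𝓝 (H (Z 0))) := by
          rw [hHZ, show H ∘ Z = u from funext hHZ]
          exact huc.continuousAt (hΩ.mem_nhds hz)
        exact (map_mono (hopen 0)).trans (by rwa [map_map])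
    · exact (hoff z hz hz0).differentiableWithinAt
  · rintro ⟨H, hH, huH⟩ x hx
    have hHd : HasDerivAt H (deriv H (Z (skewPolar M x))) (Z (skewPolar M x)) :=
      (hH.differentiableAt (hnhds _ hx)).hasDerivAt
    rw [hZ] at hHd
    have hRf : HasFDerivAt (fun x : ℝ × ℝ => R x.2)
        (R' x.2 • ContinuousLinearMap.snd ℝ ℝ ℝ) x :=
      (hR x.2).comp_hasFDerivAt x hasFDerivAt_snd
    have hW : HasFDerivAt (fun x : ℝ × ℝ => ((x.1 : ℂ) + R x.2 * I) * mu⁻¹)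
        (mu⁻¹ • (ofRealCLM.comp (ContinuousLinearMap.fst ℝ ℝ ℝ) +
          I • ofRealCLM.comp (R' x.2 • ContinuousLinearMap.snd ℝ ℝ ℝ))) x :=
      ((ofRealCLM.hasFDerivAt.comp x hasFDerivAt_fst).add
        ((ofRealCLM.hasFDerivAt.comp x hRf).mul_const I)).mul_const mu⁻¹
    simp only [← div_eq_mul_inv] at hW
    have hG := (hHd.comp _ (Complex.hasDerivAt_exp _)).comp_hasFDerivAt x hW
    have hev : u ∘ skewPolar M =ᶠ[𝓝 x]
        (H ∘ Complex.exp) ∘ fun x : ℝ × ℝ => ((x.1 : ℂ) + R x.2 * I) / mu := by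
      filter_upwards [hV.mem_nhds hx] with y hy
      rw [Function.comp_apply, huH _ hy, hZ]
      rfl
    rw [(hG.congr_of_eventuallyEq hev).fderiv]
    simp
    ring

end FirstIntegral

/-- Suppose L satisfies condition (P) on ℝ²∖{0} (so Re μ > 0 and Z_μ is a
homeomorphism).  Let Ω be open.  A function u, continuous on Ω and C¹ on Ω∖{0},
satisfies Lu = 0 pointwise on Ω∖{0} iff u = H ∘ Z_μ on Ω for some H holomorphic
on Z_μ(Ω). -/
theorem stmt_4
    (A B : ℝ × ℝ → ℂ) (lam : ℂ)
    (hA : ContDiffOn ℝ (⊤ : ℕ∞) A {z : ℝ × ℝ | z ≠ 0})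
    (hB : ContDiffOn ℝ (⊤ : ℕ∞) B {z : ℝ × ℝ | z ≠ 0})
    (hlam : 1 < lam.re)
    (hAh : ∀ t : ℝ, 0 < t → ∀ z : ℝ × ℝ, A (t • z) = (t : ℂ) ^ lam * A z)
    (hBh : ∀ t : ℝ, 0 < t → ∀ z : ℝ × ℝ, B (t • z) = (t : ℂ) ^ lam * B z)
    (a b p q : ℝ → ℂ)
    (ha : ∀ θ : ℝ, a θ = A (Real.cos θ, Real.sin θ))
    (hb : ∀ θ : ℝ, b θ = B (Real.cos θ, Real.sin θ))
    (hpdef : ∀ θ : ℝ, p θ = b θ * (Real.cos θ : ℂ) - a θ * (Real.sin θ : ℂ))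
    (hqdef : ∀ θ : ℝ, q θ = Complex.I * (a θ * (Real.cos θ : ℂ) + b θ * (Real.sin θ : ℂ)))
    (hC1 : interior {θ : ℝ | (q θ * (starRingEnd ℂ) (p θ)).re = 0} = ∅)
    (hC2 : ∀ θ : ℝ, p θ ≠ 0)
    (mu : ℂ)
    (hmudef : mu = (1 / (2 * Real.pi)) * ∫ θ in (0:ℝ)..(2 * Real.pi), q θ / p θ)
    (hmunorm : 0 ≤ mu.re)
    (hP : (∀ θ : ℝ, 0 ≤ (q θ * (starRingEnd ℂ) (p θ)).re) ∨
          (∀ θ : ℝ, (q θ * (starRingEnd ℂ) (p θ)).re ≤ 0))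
    (phi : ℝ → ℂ)
    (hphiper : Function.Periodic phi (2 * Real.pi))
    (hphider : ∀ θ : ℝ, HasDerivAt phi (q θ / (mu * p θ) - 1) θ)
    (hphimean : (∫ θ in (0:ℝ)..(2 * Real.pi), phi θ) = 0)
    (Z : ℝ × ℝ → ℂ) (hZzero : Z 0 = 0)
    (hZ : ∀ r θ : ℝ, 0 < r → Z (r * Real.cos θ, r * Real.sin θ) =
      Complex.exp ((Real.log r : ℂ) / mu) * Complex.exp (Complex.I * ((θ : ℂ) + phi θ)))
    (Ω : Set (ℝ × ℝ)) (hΩ : IsOpen Ω)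
    (u : ℝ × ℝ → ℂ)
    (huc : ContinuousOn u Ω)
    (hu1 : ContDiffOn ℝ 1 u (Ω \ {0})) :
    (∀ z ∈ Ω \ {(0 : ℝ × ℝ)},
        A z * fderiv ℝ u z (1, 0) + B z * fderiv ℝ u z (0, 1) = 0) ↔
    (∃ H : ℂ → ℂ, DifferentiableOn ℂ H (Z '' Ω) ∧ ∀ z ∈ Ω, u z = H (Z z)) := by
  have hcs : ∀ θ : ℝ, ((Real.cos θ, Real.sin θ) : ℝ × ℝ) ≠ 0 := by
    intro θ h
    have h1 := Real.sin_sq_add_cos_sq θ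
    rw [Prod.mk_eq_zero] at h
    simp [h.1, h.2] at h1
  have hdiff : ∀ {F : ℝ × ℝ → ℂ}, ContDiffOn ℝ (⊤ : ℕ∞) F {z : ℝ × ℝ | z ≠ 0} →
      Differentiable ℝ fun θ : ℝ => F (Real.cos θ, Real.sin θ) := by
    intro F hF θ
    have h1 : DifferentiableAt ℝ F (Real.cos θ, Real.sin θ) :=
      (hF.differentiableOn (by simp)).differentiableAt (isOpen_ne.mem_nhds (hcs θ))
    have h2 : DifferentiableAt ℝ (fun θ : ℝ => (Real.cos θ, Real.sin θ)) θ := by fun_prop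
    exact h1.comp θ h2
  have hda : Differentiable ℝ a := (funext ha : a = _) ▸ hdiff hA
  have hdb : Differentiable ℝ b := (funext hb : b = _) ▸ hdiff hB
  have hdc : Differentiable ℝ fun θ : ℝ => (Real.cos θ : ℂ) := fun θ =>
    ofRealCLM.differentiableAt.comp θ Real.differentiable_cos.differentiableAt
  have hds : Differentiable ℝ fun θ : ℝ => (Real.sin θ : ℂ) := fun θ =>
    ofRealCLM.differentiableAt.comp θ Real.differentiable_sin.differentiableAt
  have hdp : Differentiable ℝ p :=
    (funext hpdef : p = _) ▸ (hdb.mul hdc).sub (hda.mul hds)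
  have hdq : Differentiable ℝ q :=
    (funext hqdef : q = _) ▸ ((hda.mul hdc).add (hdb.mul hds)).const_mul I
  have hdqp : Differentiable ℝ fun θ => q θ / p θ := fun θ => (hdq θ).div (hdp θ) (hC2 θ)
  have hmu : mu ≠ 0 := by
    intro h0
    have hd : ∀ θ : ℝ, HasDerivAt (fun θ : ℝ => phi θ + (θ : ℂ)) 0 θ := by
      intro θ
      exact ((hphider θ).add (hasDerivAt_id θ).ofReal_comp).congr_deriv (by simp [h0])
    have h1 := is_const_of_deriv_eq_zero (fun θ => (hd θ).differentiableAt)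
      (fun θ => (hd θ).deriv) 0 (2 * π)
    have h2 := hphiper 0
    rw [zero_add] at h2
    rw [h2] at h1
    simp [Real.pi_ne_zero] at h1
  let Q : ℝ → ℂ := fun θ => mu * (θ + phi θ)
  have hQ : ∀ θ, HasDerivAt Q (q θ / p θ) θ := by
    intro θ
    refine (((hasDerivAt_id θ).ofReal_comp.add (hphider θ)).const_mul mu).congr_deriv ?_
    have := hC2 θ
    simp
    field_simp
  have hQper : ∀ (t : ℝ) (n : ℤ), Q (t + n * (2 * π)) = Q t + n * (2 * π) * mu := by
    intro t n
    have := hphiper.int_mul n t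
    simp only [Q, this]
    push_cast
    ring
  let R : ℝ → ℝ := fun θ => (Q θ).re
  let M : ℝ → ℝ := fun θ => (Q θ).im
  have hR : ∀ θ, HasDerivAt R (q θ / p θ).re θ := fun θ =>
    reCLM.hasFDerivAt.comp_hasDerivAt θ (hQ θ)
  have hM : ∀ θ, HasDerivAt M (q θ / p θ).im θ := fun θ =>
    imCLM.hasFDerivAt.comp_hasDerivAt θ (hQ θ)
  have hRper : ∀ (t : ℝ) (n : ℤ), R (t + n * (2 * π)) = R t + n * (2 * π) * mu.re := by
    intro t n
    simpa using congrArg re (hQper t n)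
  have hMper : ∀ (t : ℝ) (n : ℤ), M (t + n * (2 * π)) = M t + n * (2 * π) * mu.im := by
    intro t n
    simpa using congrArg im (hQper t n)
  have hreal : ∀ θ, (q θ * (starRingEnd ℂ) (p θ)).re = normSq (p θ) * (q θ / p θ).re := by
    intro θ
    have h1 : normSq (p θ) ≠ 0 := by simpa using hC2 θ
    rw [div_re, mul_re, conj_re, conj_im]
    field_simp
    ring
  have hpos : ∀ θ, 0 < normSq (p θ) := fun θ => normSq_pos.mpr (hC2 θ)
  have hint : interior {θ : ℝ | (q θ / p θ).re = 0} = ∅ := by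
    rw [← hC1]
    congr 1
    ext θ
    simp [hreal, hC2 θ]
  have hper := hRper 0 1
  simp only [Int.cast_one, one_mul, zero_add] at hper
  have hstrict : StrictMono R := by
    rcases hP with h | h
    · exact strictMono_of_hasDerivAt_nonneg_s4 hR
        (fun θ => nonneg_of_mul_nonneg_right (hreal θ ▸ h θ) (hpos θ)) hint
    · have hanti : StrictMono fun θ => -R θ :=
        strictMono_of_hasDerivAt_nonneg_s4 (fun θ => (hR θ).neg)
          (fun θ => neg_nonneg.mpr (nonpos_of_mul_nonpos_right (hreal θ ▸ h θ) (hpos θ)))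
          (by simpa using hint)
      have h1 : -R 0 < -R (2 * π) := hanti Real.two_pi_pos
      have h2 : 0 ≤ 2 * π * mu.re := mul_nonneg Real.two_pi_pos.le hmunorm
      linarith
  have hmure : 0 < mu.re := by
    have h1 : R 0 < R (2 * π) := hstrict Real.two_pi_pos
    rw [hper] at h1
    exact pos_of_mul_pos_right (by linarith) Real.two_pi_pos.le
  have hRc : Continuous R := continuous_iff_continuousAt.mpr fun θ => (hR θ).continuousAt
  have hMc : Continuous M := continuous_iff_continuousAt.mpr fun θ => (hM θ).continuousAt
  have hphic : Continuous phi := continuous_iff_continuousAt.mpr fun θ => (hphider θ).continuousAt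
  obtain ⟨C, hC⟩ : ∃ C, ∀ θ, ‖phi θ‖ ≤ C := by
    obtain ⟨C, hC⟩ := (hphiper.isBounded_of_continuous Real.two_pi_pos.ne' hphic).exists_norm_le
    exact ⟨C, fun θ => hC _ (mem_range_self θ)⟩
  obtain ⟨T, hT, hTR, hRT⟩ := exists_continuous_inverse hRc hstrict hmure (C := ‖mu‖ * C) (by
    intro θ
    have h1 : R θ - mu.re * θ = (mu * phi θ).re := by
      simp only [R, Q, mul_add, add_re, re_mul_ofReal]
      ring
    rw [h1]
    refine (abs_re_le_norm _).trans ?_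
    rw [norm_mul]
    exact mul_le_mul_of_nonneg_left (hC θ) (norm_nonneg _))
  have hZpolar : ∀ x : ℝ × ℝ, Z (skewPolar M x) =
      Complex.exp (((x.1 + M x.2 : ℝ) : ℂ) / mu + I * (x.2 + phi x.2)) := by
    intro x
    rw [skewPolar, hZ _ _ (Real.exp_pos _), Real.log_exp, Complex.exp_add]
  have hZP : ∀ x : ℝ × ℝ, Z (skewPolar M x) = Complex.exp ((x.1 + R x.2 * I) / mu) := by
    intro x
    rw [hZpolar]
    congr 1
    have h1 : (R x.2 : ℂ) + M x.2 * I = mu * (x.2 + phi x.2) := re_add_im _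
    field_simp
    push_cast
    linear_combination (-I) * h1 + (M x.2 : ℂ) * I_sq
  have hα : 0 < (mu⁻¹).re := by
    rw [inv_re]
    exact div_pos hmure (normSq_pos.mpr hmu)
  have hlow : ∀ x : ℝ × ℝ,
      Real.exp ((mu⁻¹).re * (x.1 + M x.2) - C) ≤ ‖Z (skewPolar M x)‖ := by
    intro x
    rw [hZpolar, Complex.norm_exp, Real.exp_le_exp, div_eq_mul_inv, add_re, re_ofReal_mul]
    have h1 : (I * ((x.2 : ℂ) + phi x.2)).re = -(phi x.2).im := by simp
    have h2 := (le_abs_self _).trans ((abs_im_le_norm (phi x.2)).trans (hC x.2))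
    rw [h1]
    linarith
  have hinj := firstIntegral_injective hmu hstrict.injective hRper hMper hZzero hZP
  have hopen := nhds_firstIntegral_le hmu hMc hT hTR hRT hα hZzero hZP hlow
  have hud : DifferentiableOn ℝ u (Ω \ {0}) := hu1.differentiableOn one_ne_zero
  rw [← cauchyRiemann_iff_exists_comp_firstIntegral hmu hM hR
    (fun θ => reCLM.differentiableAt.comp θ (hdqp θ)) hstrict.monotone hT hTR hRT hZP hinj hopen
    hΩ huc hud]
  have hiff : ∀ x, skewPolar M x ∈ Ω → _ := fun x hx =>
    vectorField_eq_zero_iff_skewPolar hAh hBh (hM x.2) (hC2 x.2)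
      (by rw [hpdef, ha, hb]) (by rw [hqdef, ha, hb]) (re_add_im _).symm
      (hud.differentiableAt ((hΩ.sdiff isClosed_singleton).mem_nhds
        ⟨hx, skewPolar_ne_zero M x⟩))
  constructor
  · exact fun h x hx => (hiff x hx).mp (h _ ⟨hx, skewPolar_ne_zero M x⟩)
  · rintro h z ⟨hz, hz0⟩
    obtain ⟨x, rfl⟩ := exists_skewPolar_eq M hz0
    exact (hiff x hz).mpr (h x hz)
end

section
/- The vector field L satisfies the Liouville property — i.e. every bounded function u ∈ C¹(ℝ²∖{0}) with Lu = 0 pointwise on ℝ²∖{0} is constant — if and only if Re μ ≠ 0 (equivalently, given the normalization Re μ ≥ 0, if and only if Re μ > 0). -/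
open Real Complex Set

open MeasureTheory Filter Topology

/-- A Gaussian with complex centre is dominated by a centred real one. -/
theorem norm_cexp_neg_mul_sub_sq_le {c K : ℝ} (hc : 0 ≤ c) {ζ : ℂ} (hζ : ‖ζ‖ ≤ K) (σ : ℝ) :
    ‖cexp (-(c : ℂ) * (ζ - σ) ^ 2)‖ ≤ rexp (3 * c * K ^ 2) * rexp (-(c / 2) * σ ^ 2) := by
  rw [Complex.norm_exp, ← Real.exp_add, Real.exp_le_exp]
  have hre : (-(c : ℂ) * (ζ - σ) ^ 2).re = -c * ((ζ.re - σ) ^ 2 - ζ.im ^ 2) := by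
    simp [pow_two]
  have hnorm : ζ.re ^ 2 + ζ.im ^ 2 ≤ K ^ 2 := by
    have h := Complex.sq_norm ζ
    rw [Complex.normSq_apply] at h
    nlinarith [norm_nonneg ζ]
  rw [hre]
  have key : -((ζ.re - σ) ^ 2 - ζ.im ^ 2) ≤ 3 * K ^ 2 - σ ^ 2 / 2 := by
    nlinarith [sq_nonneg (σ - 2 * ζ.re), sq_nonneg ζ.re, sq_nonneg ζ.im]
  nlinarith [mul_le_mul_of_nonneg_left key hc]

theorem integrable_mul_cexp_neg_mul_sub_sq {c C : ℝ} (hc : 0 < c) {v : ℝ → ℂ}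
    (hv : Continuous v) (hC : ∀ σ, ‖v σ‖ ≤ C) (ζ : ℂ) :
    Integrable fun σ : ℝ => v σ * cexp (-(c : ℂ) * (ζ - σ) ^ 2) := by
  refine Integrable.mono'
    (((integrable_exp_neg_mul_sq (half_pos hc)).const_mul (C * rexp (3 * c * ‖ζ‖ ^ 2))))
    (by fun_prop) (ae_of_all _ fun σ => ?_)
  rw [norm_mul, mul_assoc]
  exact mul_le_mul (hC σ) (norm_cexp_neg_mul_sub_sq_le hc.le le_rfl σ) (norm_nonneg _)
    ((norm_nonneg _).trans (hC σ))

/-- The convolution of a bounded continuous function with a Gaussian is entire. -/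
theorem differentiable_integral_mul_cexp_neg_mul_sub_sq {c C : ℝ} (hc : 0 < c) {v : ℝ → ℂ}
    (hv : Continuous v) (hC : ∀ σ, ‖v σ‖ ≤ C) :
    Differentiable ℂ fun w : ℂ => ∫ σ : ℝ, v σ * cexp (-(c : ℂ) * (w - σ) ^ 2) := by
  intro w₀
  have hC0 : 0 ≤ C := (norm_nonneg _).trans (hC 0)
  set K : ℝ := ‖w₀‖ + 1 with hK
  have hK0 : 0 ≤ K := by positivity
  have hball : ∀ w ∈ Metric.ball w₀ 1, ‖w‖ ≤ K := by
    intro w hw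
    rw [mem_ball_iff_norm] at hw
    linarith [norm_le_norm_add_norm_sub' w w₀]
  refine (hasDerivAt_integral_of_dominated_loc_of_deriv_le
    (s := Metric.ball w₀ 1)
    (F := fun (w : ℂ) (σ : ℝ) => v σ * cexp (-(c : ℂ) * (w - σ) ^ 2))
    (F' := fun (w : ℂ) (σ : ℝ) =>
      v σ * (cexp (-(c : ℂ) * (w - σ) ^ 2) * (-(c : ℂ) * (2 * (w - σ)))))
    (bound := fun σ => C * (rexp (3 * c * K ^ 2) * (2 * c)) * (K * rexp (-(c / 2) * σ ^ 2) +
      ‖σ * rexp (-(c / 2) * σ ^ 2)‖))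
    (Metric.ball_mem_nhds w₀ one_pos) (Eventually.of_forall fun w => by fun_prop)
    (integrable_mul_cexp_neg_mul_sub_sq hc hv hC w₀) (by fun_prop)
    (ae_of_all _ fun σ w hw => ?_) ?_ (ae_of_all _ fun σ w _ => ?_)).2.differentiableAt
  · have h1 := norm_cexp_neg_mul_sub_sq_le hc.le (hball w hw) σ
    have h2 : ‖-(c : ℂ) * (2 * (w - σ))‖ ≤ 2 * c * (K + |σ|) := by
      have h3 : ‖w - σ‖ ≤ K + |σ| := by
        refine (norm_sub_le _ _).trans ?_
        rw [Complex.norm_real, Real.norm_eq_abs]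
        linarith [hball w hw]
      rw [norm_mul, norm_mul, norm_neg, Complex.norm_real, Real.norm_of_nonneg hc.le]
      norm_num
      nlinarith
    rw [norm_mul, norm_mul]
    calc _ ≤ C * ((rexp (3 * c * K ^ 2) * rexp (-(c / 2) * σ ^ 2)) * (2 * c * (K + |σ|))) := by
          gcongr
          exact hC σ
      _ = _ := by
          rw [norm_mul, Real.norm_eq_abs, Real.norm_of_nonneg (Real.exp_pos _).le]
          ring
  · exact (((integrable_exp_neg_mul_sq (half_pos hc)).const_mul K).add
      (integrable_mul_exp_neg_mul_sq (half_pos hc)).norm).const_mul _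
  · have h := ((((hasDerivAt_id w).sub_const (σ : ℂ)).pow 2).const_mul (-(c : ℂ))).cexp.const_mul
      (v σ)
    simpa using h

/-- A bounded continuous function whose convolutions with all Gaussians take the same value at
two points takes the same value at these points. -/
theorem eq_of_forall_integral_gaussian_eq {C : ℝ} {v : ℝ → ℂ}
    (hv : Continuous v) (hC : ∀ σ, ‖v σ‖ ≤ C) {x y : ℝ}
    (h : ∀ c : ℝ, 0 < c → ∫ σ : ℝ, v σ * cexp (-(c : ℂ) * (x - σ) ^ 2) =
      ∫ σ : ℝ, v σ * cexp (-(c : ℂ) * (y - σ) ^ 2)) : v x = v y := by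
  have hlim : ∀ x : ℝ, Tendsto (fun n : ℕ => ∫ τ : ℝ, v (x - τ / ((n : ℝ) + 1)) *
      (rexp (-1 * τ ^ 2) : ℂ)) atTop (𝓝 (∫ τ : ℝ, v x * (rexp (-1 * τ ^ 2) : ℂ))) := by
    intro x
    refine tendsto_integral_of_dominated_convergence (fun τ => C * rexp (-1 * τ ^ 2))
      (fun n => by fun_prop)
      ((integrable_exp_neg_mul_sq one_pos).const_mul C) (fun n => ae_of_all _ fun τ => ?_)
      (ae_of_all _ fun τ => ?_)
    · rw [norm_mul, Complex.norm_real, Real.norm_of_nonneg (Real.exp_pos _).le]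
      exact mul_le_mul_of_nonneg_right (hC _) (Real.exp_pos _).le
    · refine Tendsto.mul_const _ ((hv.tendsto x).comp ?_)
      have h0 : Tendsto (fun n : ℕ => τ * (1 / ((n : ℝ) + 1))) atTop (𝓝 (τ * 0)) :=
        tendsto_one_div_add_atTop_nhds_zero_nat.const_mul τ
      have h1 := h0.const_sub x
      simpa [div_eq_mul_inv] using h1
  have hscale : ∀ (x : ℝ) (n : ℕ), ∫ τ : ℝ, v (x - τ / ((n : ℝ) + 1)) * (rexp (-1 * τ ^ 2) : ℂ) =
      ((n : ℝ) + 1) • ∫ σ : ℝ, v σ * cexp (-((((n : ℝ) + 1) ^ 2 : ℝ) : ℂ) * (x - σ) ^ 2) := by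
    intro x n
    have hn : (0 : ℝ) < (n : ℝ) + 1 := by positivity
    have h1 := Measure.integral_comp_mul_left
      (fun τ : ℝ => v (x - τ / ((n : ℝ) + 1)) * (rexp (-1 * τ ^ 2) : ℂ)) ((n : ℝ) + 1)
    rw [abs_of_pos (inv_pos.2 hn)] at h1
    have h2 := integral_sub_left_eq_self
      (fun σ : ℝ => v σ * cexp (-((((n : ℝ) + 1) ^ 2 : ℝ) : ℂ) * (x - σ) ^ 2)) volume x
    rw [← h2, ← inv_smul_eq_iff₀ hn.ne', ← h1]
    refine integral_congr_ae (ae_of_all _ fun σ => ?_)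
    simp only
    rw [mul_div_cancel_left₀ _ hn.ne']
    push_cast
    ring_nf
  have hxy : ∫ τ : ℝ, v x * (rexp (-1 * τ ^ 2) : ℂ) = ∫ τ : ℝ, v y * (rexp (-1 * τ ^ 2) : ℂ) := by
    refine tendsto_nhds_unique (hlim x) ((hlim y).congr fun n => ?_)
    rw [hscale, hscale, h _ (by positivity)]
  rw [integral_const_mul, integral_const_mul, integral_complex_ofReal, integral_gaussian] at hxy
  refine mul_right_cancel₀ ?_ hxy
  rw [Complex.ofReal_ne_zero, div_one]
  exact (Real.sqrt_pos.2 Real.pi_pos).ne'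

theorem HasDerivAt.hasFDerivAt_comp_snd {f : ℝ → ℂ} {f' : ℂ} {z : ℝ × ℝ}
    (hf : HasDerivAt f f' z.2) :
    HasFDerivAt (fun z : ℝ × ℝ => f z.2) ((ContinuousLinearMap.snd ℝ ℝ ℝ).smulRight f') z := by
  refine (hf.hasFDerivAt.comp z hasFDerivAt_snd).congr_fderiv ?_
  ext <;> simp

/-- The divergence theorem on a rectangle for solutions of `∂_θ g = i m(θ) ∂_t g`. -/
theorem integral_boundary_eq_zero_of_transport {g : ℝ × ℝ → ℂ} {g' : ℝ × ℝ → ℝ × ℝ →L[ℝ] ℂ}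
    {m : ℝ → ℂ} (hg : ∀ z, HasFDerivAt g (g' z) z) (hm : Differentiable ℝ m)
    (heq : ∀ z, g' z (0, 1) = I * m z.2 * g' z (1, 0)) (t₁ t₂ θ₁ θ₂ : ℝ) :
    (((∫ x in t₁..t₂, g (x, θ₂)) - ∫ x in t₁..t₂, g (x, θ₁)) +
      ∫ y in θ₁..θ₂, -(I * m y) * g (t₂, y)) - ∫ y in θ₁..θ₂, -(I * m y) * g (t₁, y) = 0 := by
  have hgc : Continuous g := continuous_iff_continuousAt.2 fun z => (hg z).continuousAt
  have hmc := hm.continuous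
  let f' : ℝ × ℝ → ℝ × ℝ →L[ℝ] ℂ := fun z => (-(I * m z.2)) • g' z +
    g z • (-(I • (ContinuousLinearMap.snd ℝ ℝ ℝ).smulRight (deriv m z.2)))
  have hf : ∀ z, HasFDerivAt (fun z : ℝ × ℝ => -(I * m z.2) * g z) (f' z) z := fun z =>
    ((hm z.2).hasDerivAt.hasFDerivAt_comp_snd.const_mul I).neg.mul (hg z)
  have hdiv : ∀ z, f' z (1, 0) + g' z (0, 1) = 0 := by
    intro z
    simp [f', heq z]
  have h := integral2_divergence_prod_of_hasFDerivAt_off_countable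
    (fun z : ℝ × ℝ => -(I * m z.2) * g z) g f' g' t₁ θ₁ t₂ θ₂ ∅
    countable_empty (by fun_prop) (by fun_prop) (fun z _ => hf z) (fun z _ => hg z)
    (by simp only [hdiv]; exact integrableOn_zero)
  simp only [hdiv, intervalIntegral.integral_zero] at h
  exact h.symm

theorem hasFDerivAt_cexp_neg_mul_sub_sq {m M : ℝ → ℂ} (c : ℝ) (hM : ∀ θ, HasDerivAt M (m θ) θ)
    (w : ℂ) (z : ℝ × ℝ) :
    HasFDerivAt (fun z : ℝ × ℝ => cexp (-(c : ℂ) * (w - I * M z.2 - z.1) ^ 2))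
      ((cexp (-(c : ℂ) * (w - I * M z.2 - z.1) ^ 2) *
        (-(c : ℂ) * (2 * (w - I * M z.2 - z.1)))) •
      (-(I • (ContinuousLinearMap.snd ℝ ℝ ℝ).smulRight (m z.2)) -
        Complex.ofRealCLM.comp (ContinuousLinearMap.fst ℝ ℝ ℝ))) z := by
  have h1 := ((hM z.2).hasFDerivAt_comp_snd.const_mul I).const_sub w
  have h2 : HasFDerivAt (fun z : ℝ × ℝ => (z.1 : ℂ))
      (Complex.ofRealCLM.comp (ContinuousLinearMap.fst ℝ ℝ ℝ)) z :=
    (Complex.ofRealCLM.comp (ContinuousLinearMap.fst ℝ ℝ ℝ)).hasFDerivAt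
  have h3 : HasDerivAt (fun ζ : ℂ => cexp (-(c : ℂ) * ζ ^ 2))
      (cexp (-(c : ℂ) * (w - I * M z.2 - z.1) ^ 2) * (-(c : ℂ) * (2 * (w - I * M z.2 - z.1))))
      (w - I * M z.2 - z.1) := by
    simpa using ((hasDerivAt_id (w - I * M z.2 - z.1)).pow 2).const_mul (-(c : ℂ)) |>.cexp
  have h4 := h3.comp_hasFDerivAt z (h1.sub h2)
  exact h4

/-- A first integral `t + i M(θ)` of `∂_θ - i m(θ) ∂_t` makes Gaussian averages of bounded
solutions independent of `θ`. -/
theorem integral_mul_gaussian_eq_of_transport {U : ℝ × ℝ → ℂ} {m M : ℝ → ℂ} {C c : ℝ}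
    (hc : 0 < c) (hU : Differentiable ℝ U) (hC : ∀ z, ‖U z‖ ≤ C)
    (hm : Differentiable ℝ m) (hM : ∀ θ, HasDerivAt M (m θ) θ)
    (heq : ∀ z, fderiv ℝ U z (0, 1) = I * m z.2 * fderiv ℝ U z (1, 0)) (w : ℂ) (θ₁ θ₂ : ℝ) :
    ∫ σ : ℝ, U (σ, θ₁) * cexp (-(c : ℂ) * (w - I * M θ₁ - σ) ^ 2) =
      ∫ σ : ℝ, U (σ, θ₂) * cexp (-(c : ℂ) * (w - I * M θ₂ - σ) ^ 2) := by
  have hMd : Differentiable ℝ M := fun θ => (hM θ).differentiableAt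
  have hC0 : 0 ≤ C := (norm_nonneg _).trans (hC 0)
  have hUc := hU.continuous
  have hmc := hm.continuous
  have hMc := hMd.continuous
  set E : ℝ × ℝ → ℂ := fun z => cexp (-(c : ℂ) * (w - I * M z.2 - z.1) ^ 2)
  have hEd := hasFDerivAt_cexp_neg_mul_sub_sq c hM w
  obtain ⟨K, hK⟩ := isCompact_uIcc.exists_bound_of_continuousOn (s := uIcc θ₁ θ₂)
    (f := fun θ => w - I * M θ) (by fun_prop)
  obtain ⟨K₂, hK₂⟩ := isCompact_uIcc.exists_bound_of_continuousOn (s := uIcc θ₁ θ₂)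
    (f := m) (by fun_prop)
  have hK₂0 : 0 ≤ K₂ := (norm_nonneg _).trans (hK₂ θ₁ left_mem_uIcc)
  have hzero := fun N : ℝ => integral_boundary_eq_zero_of_transport
    (fun z => (hU z).hasFDerivAt.mul (hEd z)) hm
    (fun z => by simp [heq z]; ring) (-N) N θ₁ θ₂
  have hside : ∀ s : ℝ, s ^ 2 = 1 → Tendsto
      (fun N : ℝ => ∫ y in θ₁..θ₂, -(I * m y) * (U (s * N, y) * E (s * N, y))) atTop (𝓝 0) := by
    intro s hs
    have hlim : Tendsto (fun N : ℝ => K₂ * (C * (rexp (3 * c * K ^ 2) * rexp (-(c / 2) * N ^ 2))) *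
        |θ₂ - θ₁|) atTop (𝓝 (K₂ * (C * (rexp (3 * c * K ^ 2) * 0)) * |θ₂ - θ₁|)) := by
      refine ((Tendsto.const_mul _ (Tendsto.const_mul _ (Tendsto.const_mul _
        (Real.tendsto_exp_atBot.comp ?_))))).mul_const _
      exact (tendsto_pow_atTop two_ne_zero).const_mul_atTop_of_neg (by linarith)
    simp only [mul_zero, zero_mul] at hlim
    refine squeeze_zero_norm (fun N => ?_) hlim
    refine intervalIntegral.norm_integral_le_of_norm_le_const fun y hy => ?_
    have hy' := uIoc_subset_uIcc hy
    have h1 := norm_cexp_neg_mul_sub_sq_le hc.le (hK y hy') (s * N)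
    rw [mul_pow, hs, one_mul] at h1
    rw [norm_mul, norm_mul, norm_neg, norm_mul, norm_I, one_mul]
    exact mul_le_mul (hK₂ y hy') (mul_le_mul (hC _) h1 (norm_nonneg _) hC0) (by positivity) hK₂0
  have hint : ∀ θ, Tendsto (fun N : ℝ => ∫ x in (-N)..N, U (x, θ) * E (x, θ)) atTop
      (𝓝 (∫ σ : ℝ, U (σ, θ) * E (σ, θ))) := fun θ =>
    intervalIntegral_tendsto_integral
      (integrable_mul_cexp_neg_mul_sub_sq hc (by fun_prop) (fun σ => hC (σ, θ)) (w - I * M θ))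
      tendsto_neg_atTop_atBot tendsto_id
  have htot := (((hint θ₂).sub (hint θ₁)).add (hside 1 (by norm_num))).sub
    (hside (-1) (by norm_num))
  simp only [one_mul, neg_one_mul] at htot
  have hsub : (∫ σ : ℝ, U (σ, θ₂) * E (σ, θ₂)) - (∫ σ : ℝ, U (σ, θ₁) * E (σ, θ₁)) + 0 - 0 = 0 :=
    tendsto_nhds_unique (htot.congr hzero) tendsto_const_nhds
  rw [add_zero, sub_zero, sub_eq_zero] at hsub
  exact hsub.symm

/-- Liouville property of `∂_θ - i m(θ) ∂_t` on the plane when the real part of a primitive of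
`m` takes all real values. -/
theorem eq_of_bounded_transport {U : ℝ × ℝ → ℂ} {m M : ℝ → ℂ} {C : ℝ}
    (hU : Differentiable ℝ U) (hC : ∀ z, ‖U z‖ ≤ C)
    (hm : Differentiable ℝ m) (hM : ∀ θ, HasDerivAt M (m θ) θ)
    (hsurj : ∀ y : ℝ, ∃ θ, (M θ).re = y)
    (heq : ∀ z, fderiv ℝ U z (0, 1) = I * m z.2 * fderiv ℝ U z (1, 0)) (z z' : ℝ × ℝ) :
    U z = U z' := by
  have hUc := hU.continuous
  have hconst : ∀ θ x y : ℝ, U (x, θ) = U (y, θ) := by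
    intro θ x y
    refine eq_of_forall_integral_gaussian_eq (v := fun σ => U (σ, θ)) (by fun_prop)
      (fun σ => hC (σ, θ)) fun c hc => ?_
    have hbound : Bornology.IsBounded (range fun w : ℂ =>
        ∫ σ : ℝ, U (σ, θ) * cexp (-(c : ℂ) * (w - σ) ^ 2)) := by
      refine isBounded_iff_forall_norm_le.2 ⟨∫ σ : ℝ, C * rexp (-c * σ ^ 2), ?_⟩
      rintro _ ⟨w, rfl⟩
      obtain ⟨φ, hφ⟩ := hsurj (w + I * M θ).im
      have h1 := integral_mul_gaussian_eq_of_transport hc hU hC hm hM heq (w + I * M θ) θ φ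
      rw [add_sub_cancel_right] at h1
      set x : ℝ := (w + I * M θ - I * M φ).re with hx
      have hxc : w + I * M θ - I * M φ = (x : ℂ) :=
        Complex.ext (by simp [hx]) (by simp at hφ ⊢; linarith)
      simp only [h1, hxc]
      rw [← integral_sub_left_eq_self (fun σ : ℝ => C * rexp (-c * σ ^ 2)) volume x]
      refine norm_integral_le_of_norm_le
        (((integrable_exp_neg_mul_sq hc).const_mul C).comp_sub_left x) (ae_of_all _ fun σ => ?_)
      rw [norm_mul, Complex.norm_exp]
      have hre : (-(c : ℂ) * ((x : ℂ) - σ) ^ 2).re = -c * (x - σ) ^ 2 := by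
        norm_cast
      rw [hre]
      exact mul_le_mul_of_nonneg_right (hC _) (Real.exp_pos _).le
    exact (differentiable_integral_mul_cexp_neg_mul_sub_sq hc (by fun_prop)
      fun σ => hC (σ, θ)).apply_eq_apply_of_bounded hbound x y
  refine is_const_of_fderiv_eq_zero hU (fun z => ?_) z z'
  have ht : fderiv ℝ U z (1, 0) = 0 := by
    have h1 : HasDerivAt (fun s : ℝ => U (s, z.2)) (fderiv ℝ U z (1, 0)) z.1 :=
      (hU z).hasFDerivAt.comp_hasDerivAt z.1 ((hasDerivAt_id z.1).prodMk (hasDerivAt_const z.1 z.2))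
    have h2 : (fun s : ℝ => U (s, z.2)) = fun _ => U (0, z.2) := funext fun s => hconst _ _ _
    rw [h2] at h1
    exact h1.unique (hasDerivAt_const _ _)
  ext
  · simpa using ht
  · simp [heq z, ht]

/-- Logarithmic polar coordinates `(t, θ) ↦ (eᵗ cos θ, eᵗ sin θ)`. -/
noncomputable def logPolar (z : ℝ × ℝ) : ℝ × ℝ :=
  (rexp z.1 * Real.cos z.2, rexp z.1 * Real.sin z.2)

theorem equivRealProdCLM_symm_logPolar (z : ℝ × ℝ) :
    equivRealProdCLM.symm (logPolar z) = cexp (equivRealProdCLM.symm z) := by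
  apply Complex.ext
  · simp [logPolar, Complex.exp_re]
  · simp [logPolar, Complex.exp_im]

theorem logPolar_ne_zero (z : ℝ × ℝ) : logPolar z ≠ 0 := by
  intro h
  have := equivRealProdCLM_symm_logPolar z
  rw [h, map_zero] at this
  exact Complex.exp_ne_zero _ this.symm

theorem exists_logPolar_eq {z : ℝ × ℝ} (hz : z ≠ 0) :
    ∃ x : ℝ × ℝ, x.2 ∈ Icc (-π) π ∧ logPolar x = z := by
  have hz' : equivRealProdCLM.symm z ≠ 0 := by simpa using hz
  refine ⟨equivRealProdCLM (Complex.log (equivRealProdCLM.symm z)), ?_, ?_⟩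
  · simpa [Complex.log_im] using
      ⟨(Complex.neg_pi_lt_arg _).le, Complex.arg_le_pi (equivRealProdCLM.symm z)⟩
  · apply equivRealProdCLM.symm.injective
    rw [equivRealProdCLM_symm_logPolar, ContinuousLinearEquiv.symm_apply_apply,
      Complex.exp_log hz']

theorem hasFDerivAt_logPolar (z : ℝ × ℝ) :
    HasFDerivAt logPolar
      (((ContinuousLinearMap.fst ℝ ℝ ℝ).smulRight (logPolar z)) +
        (ContinuousLinearMap.snd ℝ ℝ ℝ).smulRight (-(logPolar z).2, (logPolar z).1)) z := by
  have h1 := (hasFDerivAt_fst (𝕜 := ℝ) (p := z)).exp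
  have h2 := (hasFDerivAt_snd (𝕜 := ℝ) (p := z))
  refine ((h1.mul h2.cos).prodMk (h1.mul h2.sin)).congr_fderiv ?_
  ext <;> simp [logPolar, mul_comm]

theorem fderiv_comp_logPolar {u : ℝ × ℝ → ℂ} {z : ℝ × ℝ}
    (hu : DifferentiableAt ℝ u (logPolar z)) :
    fderiv ℝ (u ∘ logPolar) z (1, 0) = (logPolar z).1 * fderiv ℝ u (logPolar z) (1, 0) +
        (logPolar z).2 * fderiv ℝ u (logPolar z) (0, 1) ∧
      fderiv ℝ (u ∘ logPolar) z (0, 1) = -(logPolar z).2 * fderiv ℝ u (logPolar z) (1, 0) +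
        (logPolar z).1 * fderiv ℝ u (logPolar z) (0, 1) := by
  have hlin : ∀ (T : ℝ × ℝ →L[ℝ] ℂ) (x y : ℝ), T (x, y) = x * T (1, 0) + y * T (0, 1) := by
    intro T x y
    have : ((x, y) : ℝ × ℝ) = x • (1, 0) + y • (0, 1) := by simp
    rw [this, map_add, map_smul, map_smul, Complex.real_smul, Complex.real_smul]
  rw [(hu.hasFDerivAt.comp z (hasFDerivAt_logPolar z)).fderiv]
  constructor
  · simpa using hlin (fderiv ℝ u (logPolar z)) (logPolar z).1 (logPolar z).2
  · simpa using hlin (fderiv ℝ u (logPolar z)) (-(logPolar z).2) (logPolar z).1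

/-- A function of `(t, θ)` that is `2π`-periodic in `θ` descends to the punctured plane. -/
theorem exists_contDiffOn_comp_logPolar_eq {W : ℝ × ℝ → ℂ} (hW : ContDiff ℝ 1 W)
    (hper : ∀ t θ : ℝ, W (t, θ + 2 * π) = W (t, θ)) :
    ∃ u : ℝ × ℝ → ℂ, ContDiffOn ℝ 1 u {z : ℝ × ℝ | z ≠ 0} ∧ u ∘ logPolar = W := by
  set e := equivRealProdCLM with he
  let v : ℂ → ℂ := fun ζ => W (e (Complex.log ζ))
  have hv : ∀ η : ℂ, v (cexp η) = W (e η) := by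
    intro η
    obtain ⟨n, hn⟩ := Complex.exp_eq_exp_iff_exists_int.1 (Complex.exp_log (Complex.exp_ne_zero η))
    have h1 : Function.Periodic (fun θ => W (η.re, θ)) (2 * π) := fun θ => hper η.re θ
    have h2 := (h1.int_mul n) η.im
    simp only [v, hn]
    rw [← show (η.re, η.im) = e η from rfl, ← h2]
    congr 1
    simp [he]
  have hcd : ∀ ζ : ℂ, ζ ≠ 0 → ContDiffAt ℝ 1 v ζ := by
    intro ζ hζ
    by_cases hs : ζ ∈ slitPlane
    · exact hW.contDiffAt.comp ζ (e.contDiff.contDiffAt.comp ζ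
        ((Complex.contDiffAt_log hs).restrict_scalars ℝ))
    · have hs' : -ζ ∈ slitPlane := by
        rw [Complex.mem_slitPlane_iff] at hs ⊢
        push Not at hs
        left
        have : ζ.re ≠ 0 := fun h => hζ (Complex.ext h hs.2)
        simpa using lt_of_le_of_ne hs.1 this
      have h1 : ContDiffAt ℝ 1 (fun ζ : ℂ => W (e (Complex.log (-ζ) + π * I))) ζ := by
        refine hW.contDiffAt.comp ζ (e.contDiff.contDiffAt.comp ζ (ContDiffAt.add ?_
          contDiffAt_const))
        exact ((Complex.contDiffAt_log hs').restrict_scalars ℝ).comp ζ contDiffAt_id.neg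
      refine h1.congr_of_eventuallyEq ?_
      filter_upwards [isOpen_ne.mem_nhds hζ] with ξ hξ
      rw [← hv, Complex.exp_add, Complex.exp_pi_mul_I, Complex.exp_log (neg_ne_zero.2 hξ)]
      simp
  refine ⟨fun z => v (e.symm z), fun z hz => ContDiffAt.contDiffWithinAt ?_, ?_⟩
  · exact (hcd _ (by simpa using hz)).comp z e.symm.contDiff.contDiffAt
  · funext z
    simp only [Function.comp_apply, he, equivRealProdCLM_symm_logPolar]
    rw [hv]
    simp [he]

/-- L satisfies the Liouville property (every bounded C¹ solution of Lu = 0 on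
ℝ²∖{0} is constant) if and only if Re μ > 0 (given the normalization Re μ ≥ 0). -/
theorem stmt_9
    (A B : ℝ × ℝ → ℂ) (lam : ℂ)
    (hA : ContDiffOn ℝ (⊤ : ℕ∞) A {z : ℝ × ℝ | z ≠ 0})
    (hB : ContDiffOn ℝ (⊤ : ℕ∞) B {z : ℝ × ℝ | z ≠ 0})
    (hlam : 1 < lam.re)
    (hAh : ∀ t : ℝ, 0 < t → ∀ z : ℝ × ℝ, A (t • z) = (t : ℂ) ^ lam * A z)
    (hBh : ∀ t : ℝ, 0 < t → ∀ z : ℝ × ℝ, B (t • z) = (t : ℂ) ^ lam * B z)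
    (a b p q : ℝ → ℂ)
    (ha : ∀ θ : ℝ, a θ = A (Real.cos θ, Real.sin θ))
    (hb : ∀ θ : ℝ, b θ = B (Real.cos θ, Real.sin θ))
    (hpdef : ∀ θ : ℝ, p θ = b θ * (Real.cos θ : ℂ) - a θ * (Real.sin θ : ℂ))
    (hqdef : ∀ θ : ℝ, q θ = Complex.I * (a θ * (Real.cos θ : ℂ) + b θ * (Real.sin θ : ℂ)))
    (hC1 : interior {θ : ℝ | (q θ * (starRingEnd ℂ) (p θ)).re = 0} = ∅)
    (hC2 : ∀ θ : ℝ, p θ ≠ 0)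
    (mu : ℂ)
    (hmudef : mu = (1 / (2 * Real.pi)) * ∫ θ in (0:ℝ)..(2 * Real.pi), q θ / p θ)
    (hmunorm : 0 ≤ mu.re) :
    ((∀ u : ℝ × ℝ → ℂ,
        ContDiffOn ℝ 1 u {z : ℝ × ℝ | z ≠ 0} →
        (∃ C : ℝ, ∀ z : ℝ × ℝ, z ≠ 0 → ‖u z‖ ≤ C) →
        (∀ z : ℝ × ℝ, z ≠ 0 →
          A z * fderiv ℝ u z (1, 0) + B z * fderiv ℝ u z (0, 1) = 0) →
        ∃ c : ℂ, ∀ z : ℝ × ℝ, z ≠ 0 → u z = c)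
      ↔ 0 < mu.re) := by
  have hcs : ∀ θ : ℝ, ((Real.cos θ, Real.sin θ) : ℝ × ℝ) ≠ 0 := fun θ => by
    simpa [logPolar] using logPolar_ne_zero (0, θ)
  have hopen : IsOpen {z : ℝ × ℝ | z ≠ 0} := isOpen_ne
  have hdiff : ∀ F : ℝ × ℝ → ℂ, ContDiffOn ℝ (⊤ : ℕ∞) F {z : ℝ × ℝ | z ≠ 0} →
      Differentiable ℝ fun θ : ℝ => F (Real.cos θ, Real.sin θ) := fun F hF θ =>
    ((hF.contDiffAt (hopen.mem_nhds (hcs θ))).differentiableAt (by simp)).comp θ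
      (f := fun θ : ℝ => (Real.cos θ, Real.sin θ)) (by fun_prop)
  have had : Differentiable ℝ a := funext ha ▸ hdiff A hA
  have hbd : Differentiable ℝ b := funext hb ▸ hdiff B hB
  have hcd : Differentiable ℝ fun θ : ℝ => (Real.cos θ : ℂ) :=
    Complex.ofRealCLM.differentiable.comp Real.differentiable_cos
  have hsd : Differentiable ℝ fun θ : ℝ => (Real.sin θ : ℂ) :=
    Complex.ofRealCLM.differentiable.comp Real.differentiable_sin
  have hpd : Differentiable ℝ p := funext hpdef ▸ (hbd.mul hcd).sub (had.mul hsd)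
  have hqd : Differentiable ℝ q := funext hqdef ▸ ((had.mul hcd).add (hbd.mul hsd)).const_mul I
  set m : ℝ → ℂ := fun θ => q θ / p θ with hm_def
  have hm : Differentiable ℝ m := fun θ => (hqd θ).div (hpd θ) (hC2 θ)
  have hmper : Function.Periodic m (2 * π) := by
    intro θ
    simp only [hm_def, hpdef, hqdef, ha, hb, Real.cos_add_two_pi, Real.sin_add_two_pi]
  set M : ℝ → ℂ := fun θ => ∫ s in (0 : ℝ)..θ, m s with hM_def
  have hM : ∀ θ, HasDerivAt M (m θ) θ := fun θ =>
    intervalIntegral.integral_hasDerivAt_right (hm.continuous.intervalIntegrable _ _)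
      (hm.continuous.stronglyMeasurableAtFilter _ _) hm.continuous.continuousAt
  have hMc : Continuous M := continuous_iff_continuousAt.2 fun θ => (hM θ).continuousAt
  have hMmu : ∫ s in (0 : ℝ)..2 * π, m s = 2 * π * mu := by
    rw [hmudef]
    have : (π : ℂ) ≠ 0 := by exact_mod_cast Real.pi_ne_zero
    field_simp
  have hMper : ∀ θ, M (θ + 2 * π) = M θ + 2 * π * mu := by
    intro θ
    have h1 := intervalIntegral.integral_add_adjacent_intervals
      (hm.continuous.intervalIntegrable (μ := volume) 0 θ)
      (hm.continuous.intervalIntegrable θ (θ + 2 * π))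
    rw [hmper.intervalIntegral_add_eq θ 0, zero_add, hMmu] at h1
    exact h1.symm
  have hequiv : ∀ (u : ℝ × ℝ → ℂ) (z : ℝ × ℝ), DifferentiableAt ℝ u (logPolar z) →
      (A (logPolar z) * fderiv ℝ u (logPolar z) (1, 0) +
        B (logPolar z) * fderiv ℝ u (logPolar z) (0, 1) = 0 ↔
      fderiv ℝ (u ∘ logPolar) z (0, 1) = I * m z.2 * fderiv ℝ (u ∘ logPolar) z (1, 0)) := by
    intro u z hu
    obtain ⟨h1, h2⟩ := fderiv_comp_logPolar hu
    have hP : logPolar z = rexp z.1 • (Real.cos z.2, Real.sin z.2) := rfl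
    have hr : ((rexp z.1 : ℝ) : ℂ) ≠ 0 := by exact_mod_cast (Real.exp_pos z.1).ne'
    have hAz : A (logPolar z) = ((rexp z.1 : ℝ) : ℂ) ^ lam * a z.2 := by
      rw [hP, hAh _ (Real.exp_pos _), ha]
    have hBz : B (logPolar z) = ((rexp z.1 : ℝ) : ℂ) ^ lam * b z.2 := by
      rw [hP, hBh _ (Real.exp_pos _), hb]
    have hrl : ((rexp z.1 : ℝ) : ℂ) ^ lam ≠ 0 := by simp [Complex.cpow_eq_zero_iff]
    have hc2 : (Real.cos z.2 : ℂ) ^ 2 + (Real.sin z.2 : ℂ) ^ 2 = 1 := by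
      exact_mod_cast Real.cos_sq_add_sin_sq z.2
    have hpolar : p z.2 * fderiv ℝ (u ∘ logPolar) z (0, 1) -
        I * q z.2 * fderiv ℝ (u ∘ logPolar) z (1, 0) = (rexp z.1 : ℝ) *
        (a z.2 * fderiv ℝ u (logPolar z) (1, 0) + b z.2 * fderiv ℝ u (logPolar z) (0, 1)) := by
      rw [h1, h2, hpdef, hqdef]
      have hx : (((logPolar z).1 : ℝ) : ℂ) = (rexp z.1 : ℝ) * (Real.cos z.2 : ℝ) := by
        simp [logPolar]
      have hy : (((logPolar z).2 : ℝ) : ℂ) = (rexp z.1 : ℝ) * (Real.sin z.2 : ℝ) := by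
        simp [logPolar]
      rw [hx, hy]
      generalize fderiv ℝ u (logPolar z) (1, 0) = X
      generalize fderiv ℝ u (logPolar z) (0, 1) = Y
      linear_combination (rexp z.1 : ℝ) * (a z.2 * X + b z.2 * Y) * hc2 -
        (a z.2 * (Real.cos z.2 : ℂ) + b z.2 * (Real.sin z.2 : ℂ)) * (rexp z.1 : ℝ) *
        ((Real.cos z.2 : ℂ) * X + (Real.sin z.2 : ℂ) * Y) * I_sq
    have hp := hC2 z.2
    rw [hAz, hBz, mul_assoc, mul_assoc, ← mul_add, mul_eq_zero, or_iff_right hrl]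
    trans p z.2 * fderiv ℝ (u ∘ logPolar) z (0, 1) -
        I * q z.2 * fderiv ℝ (u ∘ logPolar) z (1, 0) = 0
    · rw [hpolar, mul_eq_zero, or_iff_right hr]
    · rw [sub_eq_zero, hm_def]
      field_simp
  constructor
  · intro hL
    by_contra hneg
    have hmu0 : mu.re = 0 := le_antisymm (not_lt.1 hneg) hmunorm
    obtain ⟨κ, hκ, hκmu⟩ : ∃ κ : ℝ, κ ≠ 0 ∧ cexp (I * κ * (I * (2 * π * mu))) = 1 := by
      have hmu : mu = mu.im * I := Complex.ext (by simp [hmu0]) (by simp)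
      by_cases h : mu.im = 0
      · exact ⟨1, one_ne_zero, by rw [hmu, h]; simp⟩
      · refine ⟨-mu.im⁻¹, neg_ne_zero.2 (inv_ne_zero h), ?_⟩
        have h' : (mu.im : ℂ) ≠ 0 := by exact_mod_cast h
        rw [← Complex.exp_two_pi_mul_I, hmu]
        congr 1
        push_cast
        simp only [mul_im, ofReal_re, I_im, mul_one, ofReal_im, I_re, mul_zero, add_zero]
        field_simp
        linear_combination -I_sq
    let W : ℝ × ℝ → ℂ := fun z => cexp (I * κ * (z.1 + I * M z.2))
    have hMcd : ContDiff ℝ 1 M := by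
      rw [contDiff_one_iff_deriv]
      exact ⟨fun θ => (hM θ).differentiableAt, by
        rw [funext fun θ => (hM θ).deriv]; exact hm.continuous⟩
    have hW : ContDiff ℝ 1 W := by
      have h1 : ContDiff ℝ 1 fun z : ℝ × ℝ => (z.1 : ℂ) :=
        Complex.ofRealCLM.contDiff.comp contDiff_fst
      have h2 : ContDiff ℝ 1 fun z : ℝ × ℝ => M z.2 := hMcd.comp contDiff_snd
      exact (contDiff_const.mul (h1.add (contDiff_const.mul h2))).cexp
    obtain ⟨u, hu, huW⟩ := exists_contDiffOn_comp_logPolar_eq hW (fun t θ => by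
      simp only [W, hMper]
      rw [← mul_one (cexp (I * κ * (t + I * M θ))), ← hκmu, ← Complex.exp_add]
      congr 1
      ring)
    have huW' : ∀ z, u (logPolar z) = W z := congrFun huW
    obtain ⟨K, hK⟩ := isCompact_Icc.exists_bound_of_continuousOn (s := Icc (-π) π)
      (f := M) hMc.continuousOn
    obtain ⟨c, hc⟩ := hL u hu ⟨rexp (|κ| * K), fun z hz => by
      obtain ⟨x, hx, rfl⟩ := exists_logPolar_eq hz
      rw [huW', Complex.norm_exp, Real.exp_le_exp]
      have hre : (I * κ * (x.1 + I * M x.2)).re = -(κ * (M x.2).re) := by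
        simp
      rw [hre]
      calc _ ≤ |κ * (M x.2).re| := neg_le_abs _
        _ = |κ| * |(M x.2).re| := abs_mul _ _
        _ ≤ _ := by gcongr; exact (Complex.abs_re_le_norm _).trans (hK _ hx)⟩ (fun z hz => by
      obtain ⟨x, -, rfl⟩ := exists_logPolar_eq hz
      rw [hequiv u x ((hu.contDiffAt (hopen.mem_nhds hz)).differentiableAt one_ne_zero), huW]
      have h1 : HasFDerivAt (fun z : ℝ × ℝ => (z.1 : ℂ))
          (Complex.ofRealCLM.comp (ContinuousLinearMap.fst ℝ ℝ ℝ)) x :=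
        (Complex.ofRealCLM.comp (ContinuousLinearMap.fst ℝ ℝ ℝ)).hasFDerivAt
      have h2 := ((h1.add ((hM x.2).hasFDerivAt_comp_snd.const_mul I)).const_mul (I * κ)).cexp
      have h3 : HasFDerivAt W _ x := h2
      rw [h3.fderiv]
      simp
      ring)
    have hWc : (fun t : ℝ => W (t, 0)) = fun _ => c := funext fun t => by
      rw [← huW', hc _ (logPolar_ne_zero _)]
    have hd : HasDerivAt (fun t : ℝ => W (t, 0)) (W (0, 0) * (I * κ)) 0 := by
      have := (((Complex.ofRealCLM.hasDerivAt (x := (0 : ℝ))).add_const (I * M 0)).const_mul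
        (I * κ)).cexp
      simpa [W] using this
    rw [hWc] at hd
    have := hd.unique (hasDerivAt_const _ _)
    simp [W, hκ] at this
  · intro hpos u hu hbdd hLu
    obtain ⟨C, hC⟩ := hbdd
    have hud : ∀ z, DifferentiableAt ℝ u (logPolar z) := fun z =>
      (hu.contDiffAt (hopen.mem_nhds (logPolar_ne_zero z))).differentiableAt one_ne_zero
    have hMn : ∀ n : ℤ, M (n * (2 * π)) = n * (2 * π * mu) := by
      have h1 : Function.Periodic (fun θ : ℝ => M θ - θ * mu) (2 * π) := by
        intro θ
        simp only [hMper]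
        push_cast
        ring
      intro n
      have := h1.int_mul n 0
      simp [hM_def] at this
      linear_combination this
    have hsurj : ∀ y : ℝ, ∃ θ, (M θ).re = y := by
      intro y
      have hpm : 0 < 2 * π * mu.re := by positivity
      have hre : ∀ n : ℤ, (M (n * (2 * π))).re = n * (2 * π * mu.re) := by
        intro n
        rw [hMn]
        simp
      refine mem_range_of_exists_le_of_exists_ge (f := fun θ => (M θ).re)
        (Complex.continuous_re.comp hMc) ?_ ?_
      · obtain ⟨n, hn⟩ := exists_int_lt (y / (2 * π * mu.re))
        exact ⟨n * (2 * π), by rw [hre]; exact ((lt_div_iff₀ hpm).1 hn).le⟩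
      · obtain ⟨n, hn⟩ := exists_int_gt (y / (2 * π * mu.re))
        exact ⟨n * (2 * π), by rw [hre]; exact ((div_lt_iff₀ hpm).1 hn).le⟩
    refine ⟨u (logPolar 0), fun z hz => ?_⟩
    obtain ⟨x, -, rfl⟩ := exists_logPolar_eq hz
    exact eq_of_bounded_transport (U := u ∘ logPolar)
      (fun z => (hud z).comp z (hasFDerivAt_logPolar z).differentiableAt)
      (fun z => hC _ (logPolar_ne_zero z)) hm hM hsurj
      (fun z => (hequiv u z (hud z)).1 (hLu _ (logPolar_ne_zero z))) x 0
end
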